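/- arXiv:1006.3501 — 3 statements merged into one kernel-verified Lean document; each statement's English description precedes it below -/
import Mathlib

section
/- Let C be a spherical fusion category over a commutative ring k. Then the center Z(C), equipped with its braiding and its pivotal structure, is a ribbon category: for every half braiding (A,σ) of C, the dual morphism (θ_{(A,σ)})* : A* → A* (dual taken in C) of the twist θ_{(A,σ)} = (id_A ⊗ ev_r(A))(σ_A ⊗ id_{A*})(id_A ⊗ coev_l(A)) : A → A equals the twist θ_{(A,σ)*} of the dual half braiding (A,σ)* = (A*, σ^∨). -/
open CategoryTheory CategoryTheory.Limits MonoidalCategory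

universe v u w

/-- A pivotal category: a monoidal category in which every object is equipped with a dual
object and with evaluation/coevaluation morphisms forming a left duality and a right
duality, such that left and right duals of morphisms coincide, the left and right
monoidal constraints coincide, and the left and right evaluations of the unit coincide. -/
class PivotalCat (C : Type u) [Category.{v} C] [MonoidalCategory C] where
  dual : C → C
  evl : ∀ X : C, dual X ⊗ X ⟶ 𝟙_ C
  coevl : ∀ X : C, 𝟙_ C ⟶ X ⊗ dual X
  evr : ∀ X : C, X ⊗ dual X ⟶ 𝟙_ C
  coevr : ∀ X : C, 𝟙_ C ⟶ dual X ⊗ X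
  left_zigzag₁ : ∀ X : C,
    (λ_ X).inv ≫ (coevl X ▷ X) ≫ (α_ X (dual X) X).hom ≫ (X ◁ evl X) ≫ (ρ_ X).hom = 𝟙 X
  left_zigzag₂ : ∀ X : C,
    (ρ_ (dual X)).inv ≫ (dual X ◁ coevl X) ≫ (α_ (dual X) X (dual X)).inv ≫
      (evl X ▷ dual X) ≫ (λ_ (dual X)).hom = 𝟙 (dual X)
  right_zigzag₁ : ∀ X : C,
    (ρ_ X).inv ≫ (X ◁ coevr X) ≫ (α_ X (dual X) X).inv ≫ (evr X ▷ X) ≫ (λ_ X).hom = 𝟙 X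
  right_zigzag₂ : ∀ X : C,
    (λ_ (dual X)).inv ≫ (coevr X ▷ dual X) ≫ (α_ (dual X) X (dual X)).hom ≫
      (dual X ◁ evr X) ≫ (ρ_ (dual X)).hom = 𝟙 (dual X)
  ldual_eq_rdual : ∀ {X Y : C} (f : X ⟶ Y),
    (ρ_ (dual Y)).inv ≫ (dual Y ◁ coevl X) ≫ (dual Y ◁ (f ▷ dual X)) ≫
      (α_ (dual Y) Y (dual X)).inv ≫ (evl Y ▷ dual X) ≫ (λ_ (dual X)).hom =
    (λ_ (dual Y)).inv ≫ (coevr X ▷ dual Y) ≫ ((dual X ◁ f) ▷ dual Y) ≫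
      (α_ (dual X) Y (dual Y)).hom ≫ (dual X ◁ evr Y) ≫ (ρ_ (dual X)).hom
  constraint_eq : ∀ X Y : C,
    (ρ_ (dual X ⊗ dual Y)).inv ≫ ((dual X ⊗ dual Y) ◁ coevl (Y ⊗ X)) ≫
      (α_ (dual X) (dual Y) ((Y ⊗ X) ⊗ dual (Y ⊗ X))).hom ≫
      (dual X ◁ (α_ (dual Y) (Y ⊗ X) (dual (Y ⊗ X))).inv) ≫
      (dual X ◁ (((α_ (dual Y) Y X).inv ≫ (evl Y ▷ X) ≫ (λ_ X).hom) ▷ dual (Y ⊗ X))) ≫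
      (α_ (dual X) X (dual (Y ⊗ X))).inv ≫ (evl X ▷ dual (Y ⊗ X)) ≫ (λ_ (dual (Y ⊗ X))).hom =
    (λ_ (dual X ⊗ dual Y)).inv ≫ (coevr (Y ⊗ X) ▷ (dual X ⊗ dual Y)) ≫
      (α_ (dual (Y ⊗ X)) (Y ⊗ X) (dual X ⊗ dual Y)).hom ≫
      (dual (Y ⊗ X) ◁ ((α_ Y X (dual X ⊗ dual Y)).hom ≫ (Y ◁ (α_ X (dual X) (dual Y)).inv) ≫
        (Y ◁ (evr X ▷ dual Y)) ≫ (Y ◁ (λ_ (dual Y)).hom) ≫ evr Y)) ≫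
      (ρ_ (dual (Y ⊗ X))).hom
  ev_unit : (ρ_ (dual (𝟙_ C))).inv ≫ evl (𝟙_ C) = (λ_ (dual (𝟙_ C))).inv ≫ evr (𝟙_ C)

namespace PivotalCat

variable {C : Type u} [Category.{v} C] [MonoidalCategory C] [PivotalCat C]

/-- The (common left = right) dual of a morphism. -/
def pdual {X Y : C} (f : X ⟶ Y) : dual Y ⟶ dual X :=
  (ρ_ (dual Y)).inv ≫ (dual Y ◁ coevl X) ≫ (dual Y ◁ (f ▷ dual X)) ≫
    (α_ (dual Y) Y (dual X)).inv ≫ (evl Y ▷ dual X) ≫ (λ_ (dual X)).hom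

/-- The (common left = right) pivotal monoidal constraint `X* ⊗ Y* ⟶ (Y ⊗ X)*`. -/
def mcon (X Y : C) : dual X ⊗ dual Y ⟶ dual (Y ⊗ X) :=
  (ρ_ (dual X ⊗ dual Y)).inv ≫ ((dual X ⊗ dual Y) ◁ coevl (Y ⊗ X)) ≫
    (α_ (dual X) (dual Y) ((Y ⊗ X) ⊗ dual (Y ⊗ X))).hom ≫
    (dual X ◁ (α_ (dual Y) (Y ⊗ X) (dual (Y ⊗ X))).inv) ≫
    (dual X ◁ (((α_ (dual Y) Y X).inv ≫ (evl Y ▷ X) ≫ (λ_ X).hom) ▷ dual (Y ⊗ X))) ≫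
    (α_ (dual X) X (dual (Y ⊗ X))).inv ≫ (evl X ▷ dual (Y ⊗ X)) ≫ (λ_ (dual (Y ⊗ X))).hom

/-- The left trace of an endomorphism. -/
def trl {X : C} (f : X ⟶ X) : 𝟙_ C ⟶ 𝟙_ C := coevr X ≫ (dual X ◁ f) ≫ evl X

/-- The right trace of an endomorphism. -/
def trr {X : C} (f : X ⟶ X) : 𝟙_ C ⟶ 𝟙_ C := coevl X ≫ (f ▷ dual X) ≫ evr X

/-- The left dimension of an object, as an endomorphism of the unit. -/
def diml (X : C) : 𝟙_ C ⟶ 𝟙_ C := trl (𝟙 X)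

/-- The right dimension of an object, as an endomorphism of the unit. -/
def dimr (X : C) : 𝟙_ C ⟶ 𝟙_ C := trr (𝟙 X)

/-- The permutation map `σ_{X,Y} : Hom(𝟙, X ⊗ Y) → Hom(𝟙, Y ⊗ X)`,
`α ↦ (ev_l X ⊗ id_{Y⊗X}) ∘ (id_{X*} ⊗ α ⊗ id_X) ∘ coev_r X`. -/
def sigmaMap (X Y : C) (a : 𝟙_ C ⟶ X ⊗ Y) : 𝟙_ C ⟶ Y ⊗ X :=
  coevr X ≫ (dual X ◁ (λ_ X).inv) ≫ (dual X ◁ (a ▷ X)) ≫ (dual X ◁ (α_ X Y X).hom) ≫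
    (α_ (dual X) X (Y ⊗ X)).inv ≫ (evl X ▷ (Y ⊗ X)) ≫ (λ_ (Y ⊗ X)).hom

end PivotalCat

/-- A pivotal category is spherical when left and right traces coincide. -/
class SphericalCat (C : Type u) [Category.{v} C] [MonoidalCategory C] [PivotalCat C] : Prop where
  tr_eq : ∀ {X : C} (f : X ⟶ X), PivotalCat.trl f = PivotalCat.trr f
/-- An object `X` of a `k`-linear category is simple if `λ ↦ λ • id_X` is a bijection
`k → End X`. -/
def IsSimpleObj (k : Type w) [CommRing k] {C : Type u} [Category.{v} C]
    [Preadditive C] [CategoryTheory.Linear k C] (X : C) : Prop :=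
  Function.Bijective fun a : k => a • 𝟙 X

/-- A monoidal `k`-category: the hom-sets are `k`-modules, composition and the monoidal
product are `k`-bilinear (all this is encoded in the instance parameters), and
`End(𝟙)` is free of rank one via `λ ↦ λ • id`. -/
class MonoidalKCat (k : Type w) [CommRing k] (C : Type u) [Category.{v} C]
    [Preadditive C] [CategoryTheory.Linear k C] [MonoidalCategory C]
    [MonoidalPreadditive C] [CategoryTheory.MonoidalLinear k C] : Prop where
  unit_free : Function.Bijective fun a : k => a • 𝟙 (𝟙_ C)

/-- The identification `End(𝟙) = k` of a monoidal `k`-category. -/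
noncomputable def toScalar (k : Type w) [CommRing k] {C : Type u} [Category.{v} C]
    [Preadditive C] [CategoryTheory.Linear k C] [MonoidalCategory C]
    [MonoidalPreadditive C] [CategoryTheory.MonoidalLinear k C] [MonoidalKCat k C]
    (f : 𝟙_ C ⟶ 𝟙_ C) : k :=
  (Equiv.ofBijective (fun a : k => a • 𝟙 (𝟙_ C))
    (MonoidalKCat.unit_free (k := k) (C := C))).symm f

/-- The left dimension of an object as an element of `k`. -/
noncomputable def sdiml (k : Type w) [CommRing k] {C : Type u} [Category.{v} C]
    [Preadditive C] [CategoryTheory.Linear k C] [MonoidalCategory C]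
    [MonoidalPreadditive C] [CategoryTheory.MonoidalLinear k C] [PivotalCat C]
    [MonoidalKCat k C] (X : C) : k :=
  toScalar k (PivotalCat.diml X)

/-- The right dimension of an object as an element of `k`. -/
noncomputable def sdimr (k : Type w) [CommRing k] {C : Type u} [Category.{v} C]
    [Preadditive C] [CategoryTheory.Linear k C] [MonoidalCategory C]
    [MonoidalPreadditive C] [CategoryTheory.MonoidalLinear k C] [PivotalCat C]
    [MonoidalKCat k C] (X : C) : k :=
  toScalar k (PivotalCat.dimr X)

/-- A pre-fusion category over `k`: a pivotal `k`-category in which every finite family of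
objects has a direct sum, every object is a finite direct sum of simple objects, and there
are no nonzero morphisms between non-isomorphic simple objects. -/
class PreFusionCat (k : Type w) [CommRing k] (C : Type u) [Category.{v} C]
    [Preadditive C] [CategoryTheory.Linear k C] [MonoidalCategory C]
    [MonoidalPreadditive C] [CategoryTheory.MonoidalLinear k C]
    [CategoryTheory.Limits.HasFiniteBiproducts C] [PivotalCat C] [MonoidalKCat k C] : Prop where
  semisimple : ∀ X : C, ∃ (n : ℕ) (obj : Fin n → C) (p : ∀ a, X ⟶ obj a) (q : ∀ a, obj a ⟶ X),
    (∀ a, IsSimpleObj k (obj a)) ∧ (∑ a, p a ≫ q a = 𝟙 X) ∧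
    (∀ a, q a ≫ p a = 𝟙 (obj a)) ∧ (∀ a b, a ≠ b → q a ≫ p b = 0)
  simple_hom_zero : ∀ {i j : C}, IsSimpleObj k i → IsSimpleObj k j →
    IsEmpty (i ≅ j) → ∀ f : i ⟶ j, f = 0

/-- A fusion category over `k`: a pre-fusion category with finitely many isomorphism
classes of simple objects. -/
class FusionCat (k : Type w) [CommRing k] (C : Type u) [Category.{v} C]
    [Preadditive C] [CategoryTheory.Linear k C] [MonoidalCategory C]
    [MonoidalPreadditive C] [CategoryTheory.MonoidalLinear k C]
    [CategoryTheory.Limits.HasFiniteBiproducts C] [PivotalCat C] [MonoidalKCat k C]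
    [PreFusionCat k C] : Prop where
  finitely_many_simples : ∃ S : Set C, S.Finite ∧
    ∀ i : C, IsSimpleObj k i → ∃ j ∈ S, Nonempty (i ≅ j)

/-- A representative set of simple objects: it contains the unit object, consists of simple
objects, and every simple object is isomorphic to exactly one of its elements. -/
def IsRepresentativeSet (k : Type w) [CommRing k] (C : Type u) [Category.{v} C]
    [Preadditive C] [CategoryTheory.Linear k C] [MonoidalCategory C] (I : Set C) : Prop :=
  (𝟙_ C) ∈ I ∧ (∀ i ∈ I, IsSimpleObj k i) ∧
    ∀ X : C, IsSimpleObj k X → ∃! i, i ∈ I ∧ Nonempty (X ≅ i)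

/-- The dimension of a fusion category with (finite) representative set `I` of simple
objects: `dim C = ∑_{i ∈ I} dim_l(i) · dim_r(i)`. -/
noncomputable def catDim (k : Type w) [CommRing k] {C : Type u} [Category.{v} C]
    [Preadditive C] [CategoryTheory.Linear k C] [MonoidalCategory C]
    [MonoidalPreadditive C] [CategoryTheory.MonoidalLinear k C] [PivotalCat C]
    [MonoidalKCat k C] (I : Finset C) : k :=
  ∑ i ∈ I, sdiml k i * sdimr k i

namespace PivotalCat

variable {C : Type u} [Category.{v} C] [MonoidalCategory C] [PivotalCat C]

/-- The twist `θ = (id_A ⊗ ev_r A) ∘ (s ⊗ id_{A*}) ∘ (id_A ⊗ coev_l A) : A ⟶ A` built from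
a self-braiding `s : A ⊗ A ⟶ A ⊗ A` (the component at `A` of a half braiding of `A`). -/
def twistHom (A : C) (s : A ⊗ A ⟶ A ⊗ A) : A ⟶ A :=
  (ρ_ A).inv ≫ (A ◁ coevl A) ≫ (α_ A A (dual A)).inv ≫ (s ▷ dual A) ≫
    (α_ A A (dual A)).hom ≫ (A ◁ evr A) ≫ (ρ_ A).hom

/-- The component at `X` of the dual half braiding `σ^∨` of a half braiding `σ` of `A`:
`σ^∨_X = (ev_l A ⊗ id_{X ⊗ A*}) ∘ (id_{A*} ⊗ σ_X⁻¹ ⊗ id_{A*}) ∘ (id_{A* ⊗ X} ⊗ coev_l A)`. -/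
def dualBeta (A X : C) (s : A ⊗ X ≅ X ⊗ A) : dual A ⊗ X ⟶ X ⊗ dual A :=
  (ρ_ (dual A ⊗ X)).inv ≫ ((dual A ⊗ X) ◁ coevl A) ≫
    (α_ (dual A) X (A ⊗ dual A)).hom ≫ (dual A ◁ (α_ X A (dual A)).inv) ≫
    (dual A ◁ (s.inv ▷ dual A)) ≫ (dual A ◁ (α_ A X (dual A)).hom) ≫
    (α_ (dual A) A (X ⊗ dual A)).inv ≫ (evl A ▷ (X ⊗ dual A)) ≫ (λ_ (X ⊗ dual A)).hom

end PivotalCat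

/-!
Closing the left strand of `σ_A` instead of the right one gives a second endomorphism `θ_l` of `A`.
Sliding `coevl A` through the half braiding and identifying `(coevl A*, evr A*)` with
`(coevr A, evl A)` shows that the twist of `(A, σ)*` is the dual of `θ_l`, in any pivotal category.
So the theorem says `θ = θ_l`. For every `g : A ⟶ A`, naturality of `σ` lets `g` pass through the
crossing, and sphericity then gives `tr (θ ≫ g) = tr (θ_l ≫ g)`. Finally, in a pre-fusion category
the trace pairing is nondegenerate, because the dimension of a simple object is not a zero divisor.
-/

section ExactPairing

open ExactPairing

variable {C : Type u} [Category.{v} C] [MonoidalCategory C]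

lemma coevaluation_comp_rightDualIso_hom {X Y₁ Y₂ : C} [p₁ : ExactPairing X Y₁]
    [p₂ : ExactPairing X Y₂] : η_ X Y₁ ≫ X ◁ (rightDualIso p₁ p₂).hom = η_ X Y₂ := by
  simpa only [rightDualIso, id_whiskerRight, Category.comp_id] using
    @coevaluation_comp_rightAdjointMate C _ _ X X ⟨Y₂⟩ ⟨Y₁⟩ (𝟙 X)

lemma rightDualIso_hom_comp_evaluation {X Y₁ Y₂ : C} [p₁ : ExactPairing X Y₁]
    [p₂ : ExactPairing X Y₂] : (rightDualIso p₁ p₂).hom ▷ X ≫ ε_ X Y₂ = ε_ X Y₁ := by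
  simpa only [rightDualIso, MonoidalCategory.whiskerLeft_id, Category.id_comp] using
    @rightAdjointMate_comp_evaluation C _ _ X X ⟨Y₂⟩ ⟨Y₁⟩ (𝟙 X)

lemma leftDualIso_hom_comp_evaluation {X₁ X₂ Y : C} [p₁ : ExactPairing X₁ Y]
    [p₂ : ExactPairing X₂ Y] : Y ◁ (leftDualIso p₁ p₂).hom ≫ ε_ X₂ Y = ε_ X₁ Y := by
  simpa only [leftDualIso, id_whiskerRight, Category.id_comp] using
    @leftAdjointMate_comp_evaluation C _ _ Y Y ⟨X₂⟩ ⟨X₁⟩ (𝟙 Y)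

end ExactPairing

section HalfBraiding

variable {C : Type u} [Category.{v} C] [MonoidalCategory C]

lemma halfBraiding_unit_hom {A : C} (σ : HalfBraiding A) :
    (σ.β (𝟙_ C)).hom = (ρ_ A).hom ≫ (λ_ A).inv := by
  have hnat := σ.naturality (λ_ (𝟙_ C)).hom
  rw [σ.monoidal] at hnat
  have hwhisker : ((σ.β (𝟙_ C)).hom ≫ (λ_ A).hom) ▷ 𝟙_ C = (ρ_ A).hom ▷ 𝟙_ C := by
    rw [← cancel_mono (σ.β (𝟙_ C)).hom, ← cancel_epi (α_ A (𝟙_ C) (𝟙_ C)).inv]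
    calc
      _ = 𝟙 _ ⊗≫ (σ.β (𝟙_ C)).hom ▷ 𝟙_ C ⊗≫ (σ.β (𝟙_ C)).hom ⊗≫ 𝟙 _ := by monoidal
      _ = ((α_ A (𝟙_ C) (𝟙_ C)).inv ≫ (σ.β (𝟙_ C)).hom ▷ 𝟙_ C ≫ (α_ _ _ _).hom ≫
          𝟙_ C ◁ (σ.β (𝟙_ C)).hom ≫ (α_ _ _ _).inv) ≫ (λ_ (𝟙_ C)).hom ▷ A := by monoidal
      _ = _ := by rw [← hnat]; monoidal
  rw [← (MonoidalCategory.whiskerRight_iff _ _).1 hwhisker, Category.assoc, Iso.hom_inv_id,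
    Category.comp_id]

end HalfBraiding

namespace PivotalCat

section Duality

open ExactPairing

variable {C : Type u} [Category.{v} C] [MonoidalCategory C] [PivotalCat C]

/-- The left duality `(evl X, coevl X)`, which makes `dual X` a right dual of `X` in Mathlib's
convention. -/
instance leftDuality (X : C) : ExactPairing X (dual X) where
  coevaluation' := coevl X
  evaluation' := evl X
  coevaluation_evaluation' := by
    rw [← cancel_epi (ρ_ (dual X)).inv, ← cancel_mono (λ_ (dual X)).hom]
    simpa using left_zigzag₂ X
  evaluation_coevaluation' := by
    rw [← cancel_epi (λ_ X).inv, ← cancel_mono (ρ_ X).hom]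
    simpa using left_zigzag₁ X

/-- The right duality `(evr X, coevr X)`, which makes `dual X` a left dual of `X` in Mathlib's
convention. -/
instance rightDuality (X : C) : ExactPairing (dual X) X where
  coevaluation' := coevr X
  evaluation' := evr X
  coevaluation_evaluation' := by
    rw [← cancel_epi (ρ_ X).inv, ← cancel_mono (λ_ X).hom]
    simpa using right_zigzag₁ X
  evaluation_coevaluation' := by
    rw [← cancel_epi (λ_ (dual X)).inv, ← cancel_mono (ρ_ (dual X)).hom]
    simpa using right_zigzag₂ X

/-- `dual X` as the chosen right dual of `X`; `pdual` is then `rightAdjointMate`. Only a local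
instance, since Mathlib already chooses the unit as its own dual. -/
abbrev hasRightDual (X : C) : HasRightDual X := ⟨dual X⟩

/-- `dual X` as the chosen left dual of `X`; by the pivotal axiom `pdual` is also
`leftAdjointMate`. -/
abbrev hasLeftDual (X : C) : HasLeftDual X := ⟨dual X⟩

attribute [local instance] hasRightDual hasLeftDual

lemma dual_whiskerLeft_coevl_comp_evl (X : C) :
    dual X ◁ coevl X ⊗≫ evl X ▷ dual X = ⊗𝟙.hom :=
  coevaluation_evaluation'' X (dual X)

lemma coevl_comp_whiskerLeft_evl (X : C) : coevl X ▷ X ⊗≫ X ◁ evl X = ⊗𝟙.hom :=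
  evaluation_coevaluation'' X (dual X)

lemma coevl_comp_pdual {X Y : C} (f : X ⟶ Y) :
    coevl Y ≫ Y ◁ pdual f = coevl X ≫ f ▷ dual X :=
  coevaluation_comp_rightAdjointMate f

lemma pdual_comp_evl {X Y : C} (f : X ⟶ Y) : pdual f ▷ X ≫ evl X = dual Y ◁ f ≫ evl Y :=
  rightAdjointMate_comp_evaluation f

lemma pdual_comp_evr {X Y : C} (f : X ⟶ Y) : X ◁ pdual f ≫ evr X = f ▷ dual Y ≫ evr Y := by
  rw [show pdual f = leftAdjointMate f from ldual_eq_rdual f]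
  exact leftAdjointMate_comp_evaluation f

lemma hom_dual_ext {W X : C} {f g : W ⟶ dual X} (h : f ▷ X ≫ evl X = g ▷ X ≫ evl X) : f = g := by
  rw [← cancel_mono (λ_ (dual X)).inv]
  calc
    f ≫ (λ_ _).inv = tensorRightHomEquiv _ X (dual X) _ (f ▷ X ≫ evl X) :=
      (tensorRightHomEquiv_whiskerRight_comp_evaluation (X := X) f).symm
    _ = tensorRightHomEquiv _ X (dual X) _ (g ▷ X ≫ evl X) := congrArg _ h
    _ = g ≫ (λ_ _).inv :=
      tensorRightHomEquiv_whiskerRight_comp_evaluation (X := X) g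

lemma mcon_comp_evl (X Y : C) :
    mcon X Y ▷ (Y ⊗ X) ≫ evl (Y ⊗ X) = 𝟙 _ ⊗≫ dual X ◁ evl Y ▷ X ⊗≫ evl X := by
  have hmcon : mcon X Y = (rightDualIso ExactPairing.tensor (leftDuality (Y ⊗ X))).hom := by
    change _ = (ρ_ _).inv ≫ (dual X ⊗ dual Y) ◁ coevl (Y ⊗ X) ≫ _ ◁ 𝟙 (Y ⊗ X) ▷ _ ≫
      (α_ _ _ _).inv ≫ (𝟙 _ ⊗≫ dual X ◁ evl Y ▷ X ⊗≫ evl X) ▷ _ ≫ (λ_ _).hom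
    dsimp only [mcon]
    monoidal
  rw [hmcon]
  exact rightDualIso_hom_comp_evaluation

lemma mcon_comp_evr (X Y : C) :
    (Y ⊗ X) ◁ mcon X Y ≫ evr (Y ⊗ X) = 𝟙 _ ⊗≫ Y ◁ evr X ▷ dual Y ⊗≫ evr Y := by
  have hmcon : mcon X Y = (leftDualIso ExactPairing.tensor (rightDuality (Y ⊗ X))).hom := by
    change _ = (λ_ _).inv ≫ coevr (Y ⊗ X) ▷ (dual X ⊗ dual Y) ≫ (_ ◁ 𝟙 (Y ⊗ X)) ▷ _ ≫
      (α_ _ _ _).hom ≫ _ ◁ (𝟙 _ ⊗≫ Y ◁ evr X ▷ dual Y ⊗≫ evr Y) ≫ (ρ_ _).hom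
    rw [mcon, constraint_eq]
    monoidal
  rw [hmcon]
  exact leftDualIso_hom_comp_evaluation

/-- The isomorphism `𝟙* ≅ 𝟙` given by either evaluation of the unit. -/
def dualUnitIso : dual (𝟙_ C) ≅ 𝟙_ C :=
  rightDualIso (leftDuality (𝟙_ C)) exactPairingUnit

lemma evl_unit : evl (𝟙_ C) = (ρ_ (dual (𝟙_ C))).hom ≫ dualUnitIso.hom := by
  rw [← rightUnitor_naturality]
  exact (rightDualIso_hom_comp_evaluation (p₁ := leftDuality (𝟙_ C))).symm

lemma evr_unit : evr (𝟙_ C) = (λ_ (dual (𝟙_ C))).hom ≫ dualUnitIso.hom := by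
  rw [← Iso.inv_comp_eq, ← ev_unit, evl_unit, Iso.inv_hom_id_assoc]

lemma pdual_evl (A : C) :
    pdual (evl A) = dualUnitIso.hom ≫ coevl (dual A) ≫ mcon A (dual A) := by
  apply hom_dual_ext
  symm
  calc
    _ = dualUnitIso.hom ▷ (dual A ⊗ A) ≫ coevl (dual A) ▷ (dual A ⊗ A) ≫
        (mcon A (dual A) ▷ (dual A ⊗ A) ≫ evl (dual A ⊗ A)) := by
      simp only [comp_whiskerRight, Category.assoc]
    _ = dualUnitIso.hom ▷ (dual A ⊗ A) ⊗≫
        (coevl (dual A) ▷ dual A ⊗≫ dual A ◁ evl (dual A)) ▷ A ⊗≫ evl A := by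
      rw [mcon_comp_evl]; monoidal
    _ = (dualUnitIso.hom ▷ (dual A ⊗ A) ≫ 𝟙_ C ◁ evl A) ⊗≫ 𝟙 _ := by
      rw [coevl_comp_whiskerLeft_evl]; monoidal
    _ = dual (𝟙_ C) ◁ evl A ≫ evl (𝟙_ C) := by
      rw [← whisker_exchange, evl_unit]; monoidal
    _ = _ := (pdual_comp_evl (evl A)).symm

/-- The pivotal isomorphism `A ⟶ A**`, comparing the right duality of `A` with the left duality of
`A*`. -/
def toDoubleDual (A : C) : A ⟶ dual (dual A) :=
  (rightDualIso (rightDuality A) (leftDuality (dual A))).hom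

lemma toDoubleDual_eq (A : C) :
    toDoubleDual A = 𝟙 _ ⊗≫ A ◁ coevl (dual A) ⊗≫ evr A ▷ dual (dual A) ⊗≫ 𝟙 _ := by
  change (ρ_ _).inv ≫ A ◁ coevl (dual A) ≫ A ◁ 𝟙 (dual A) ▷ _ ≫ (α_ _ _ _).inv ≫
    evr A ▷ _ ≫ (λ_ _).hom = _
  monoidal

lemma coevr_comp_toDoubleDual (A : C) : coevr A ≫ dual A ◁ toDoubleDual A = coevl (dual A) :=
  coevaluation_comp_rightDualIso_hom (p₁ := rightDuality A)

-- Compute `pdual (evl A)` through the left constraint and pair it with `evr` through the right one.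
lemma toDoubleDual_comp_evr (A : C) : dual A ◁ toDoubleDual A ≫ evr (dual A) = evl A := by
  have hcoev : coevl (dual A) ≫ mcon A (dual A) = dualUnitIso.inv ≫ pdual (evl A) := by
    rw [pdual_evl, Iso.inv_hom_id_assoc]
  calc
    _ = (ρ_ _).inv ≫ (dual A ⊗ A) ◁ coevl (dual A) ≫
        ((dual A ⊗ A) ◁ mcon A (dual A) ≫ evr (dual A ⊗ A)) := by
      rw [mcon_comp_evr, toDoubleDual_eq]; monoidal
    _ = (ρ_ _).inv ≫ (dual A ⊗ A) ◁ dualUnitIso.inv ≫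
        ((dual A ⊗ A) ◁ pdual (evl A) ≫ evr (dual A ⊗ A)) := by
      simp only [← MonoidalCategory.whiskerLeft_comp_assoc, hcoev]
    _ = (ρ_ _).inv ≫ ((dual A ⊗ A) ◁ dualUnitIso.inv ≫ evl A ▷ dual (𝟙_ C)) ≫ evr (𝟙_ C) := by
      rw [pdual_comp_evr, Category.assoc]
    _ = 𝟙 _ ⊗≫ evl A ⊗≫ (dualUnitIso.inv ≫ dualUnitIso.hom) ⊗≫ 𝟙 _ := by
      rw [whisker_exchange, evr_unit]; monoidal
    _ = evl A := by rw [Iso.inv_hom_id]; monoidal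

end Duality

section PartialTrace

variable {C : Type u} [Category.{v} C] [MonoidalCategory C] [PivotalCat C]

/-- The right partial trace, closing the strand `Z` on the right; the twist of a half braiding `σ`
of `A` is the right partial trace of `σ_A`. -/
def rightPartialTrace {X Y Z : C} (s : X ⊗ Z ⟶ Y ⊗ Z) : X ⟶ Y :=
  (ρ_ X).inv ≫ X ◁ coevl Z ≫ (α_ X Z (dual Z)).inv ≫ s ▷ dual Z ≫
    (α_ Y Z (dual Z)).hom ≫ Y ◁ evr Z ≫ (ρ_ Y).hom

/-- The left partial trace, closing the strand `Z` on the left. -/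
def leftPartialTrace {X Y Z : C} (s : Z ⊗ X ⟶ Z ⊗ Y) : X ⟶ Y :=
  (λ_ X).inv ≫ coevr Z ▷ X ≫ (α_ (dual Z) Z X).hom ≫ dual Z ◁ s ≫
    (α_ (dual Z) Z Y).inv ≫ evl Z ▷ Y ≫ (λ_ Y).hom

lemma twistHom_eq_rightPartialTrace (A : C) (s : A ⊗ A ⟶ A ⊗ A) :
    twistHom A s = rightPartialTrace s :=
  rfl

lemma rightPartialTrace_comp {X Y Y' Z : C} (s : X ⊗ Z ⟶ Y ⊗ Z) (g : Y ⟶ Y') :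
    rightPartialTrace s ≫ g = rightPartialTrace (s ≫ g ▷ Z) := by
  dsimp only [rightPartialTrace]
  calc
    _ = 𝟙 _ ⊗≫ X ◁ coevl Z ⊗≫ s ▷ dual Z ⊗≫ (Y ◁ evr Z ≫ g ▷ 𝟙_ C) ⊗≫ 𝟙 _ := by monoidal
    _ = _ := by rw [whisker_exchange]; monoidal

lemma comp_leftPartialTrace {X X' Y Z : C} (g : X ⟶ X') (s : Z ⊗ X' ⟶ Z ⊗ Y) :
    g ≫ leftPartialTrace s = leftPartialTrace (Z ◁ g ≫ s) := by
  dsimp only [leftPartialTrace]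
  calc
    _ = 𝟙 _ ⊗≫ (𝟙_ C ◁ g ≫ coevr Z ▷ X') ⊗≫ dual Z ◁ s ⊗≫ evl Z ▷ Y ⊗≫ 𝟙 _ := by monoidal
    _ = _ := by rw [whisker_exchange]; monoidal

lemma rightPartialTrace_dual {X Y Z : C} (s : X ⊗ dual Z ⟶ Y ⊗ dual Z) :
    rightPartialTrace s =
      𝟙 _ ⊗≫ X ◁ coevr Z ⊗≫ s ▷ Z ⊗≫ Y ◁ evl Z ⊗≫ 𝟙 _ := by
  dsimp only [rightPartialTrace]
  calc
    _ = 𝟙 _ ⊗≫ X ◁ coevr Z ⊗≫ ((X ⊗ dual Z) ◁ toDoubleDual Z ≫ s ▷ dual (dual Z)) ⊗≫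
        Y ◁ evr (dual Z) ⊗≫ 𝟙 _ := by
      rw [← coevr_comp_toDoubleDual]; monoidal
    _ = 𝟙 _ ⊗≫ X ◁ coevr Z ⊗≫ s ▷ Z ⊗≫ Y ◁ (dual Z ◁ toDoubleDual Z ≫ evr (dual Z)) ⊗≫ 𝟙 _ := by
      rw [whisker_exchange]; monoidal
    _ = _ := by rw [toDoubleDual_comp_evr]

lemma trl_rightPartialTrace {X Z : C} (s : X ⊗ Z ⟶ X ⊗ Z) :
    trl (rightPartialTrace s) = trr (leftPartialTrace s) := by
  dsimp only [trl, trr, rightPartialTrace, leftPartialTrace]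
  calc
    _ = 𝟙 _ ⊗≫ (coevr X ▷ 𝟙_ C ≫ (dual X ⊗ X) ◁ coevl Z) ⊗≫ dual X ◁ s ▷ dual Z ⊗≫
        ((dual X ⊗ X) ◁ evr Z ≫ evl X ▷ 𝟙_ C) ⊗≫ 𝟙 _ := by monoidal
    _ = 𝟙 _ ⊗≫ (𝟙_ C ◁ coevl Z ≫ coevr X ▷ (Z ⊗ dual Z)) ⊗≫ dual X ◁ s ▷ dual Z ⊗≫
        (evl X ▷ (Z ⊗ dual Z) ≫ 𝟙_ C ◁ evr Z) ⊗≫ 𝟙 _ := by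
      rw [whisker_exchange (evl X) (evr Z), ← whisker_exchange (coevr X) (coevl Z)]
    _ = _ := by monoidal

lemma trr_comp_comm {X Y : C} (f : X ⟶ Y) (g : Y ⟶ X) : trr (f ≫ g) = trr (g ≫ f) :=
  calc
    trr (f ≫ g) = (coevl X ≫ f ▷ dual X) ≫ g ▷ dual X ≫ evr X := by
      simp only [trr, comp_whiskerRight, Category.assoc]
    _ = coevl Y ≫ (Y ◁ pdual f ≫ g ▷ dual X) ≫ evr X := by
      rw [← coevl_comp_pdual, Category.assoc, Category.assoc]
    _ = coevl Y ≫ g ▷ dual Y ≫ f ▷ dual Y ≫ evr Y := by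
      rw [whisker_exchange, Category.assoc, pdual_comp_evr]
    _ = trr (g ≫ f) := by simp only [trr, comp_whiskerRight, Category.assoc]

lemma trr_rightPartialTrace_comp [SphericalCat C] {A : C} {s : A ⊗ A ⟶ A ⊗ A} {g : A ⟶ A}
    (hs : A ◁ g ≫ s = s ≫ g ▷ A) :
    trr (rightPartialTrace s ≫ g) = trr (leftPartialTrace s ≫ g) :=
  calc
    trr (rightPartialTrace s ≫ g) = trl (rightPartialTrace (s ≫ g ▷ A)) := by
      rw [← SphericalCat.tr_eq, rightPartialTrace_comp]
    _ = trr (leftPartialTrace (A ◁ g ≫ s)) := by rw [trl_rightPartialTrace, hs]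
    _ = trr (leftPartialTrace s ≫ g) := by rw [← comp_leftPartialTrace, trr_comp_comm]

end PartialTrace

section DualHalfBraiding

variable {C : Type u} [Category.{v} C] [MonoidalCategory C] [PivotalCat C]

lemma coevl_comp_halfBraiding {A : C} (σ : HalfBraiding A) (X : C) :
    A ◁ coevl X ≫ (α_ A X (dual X)).inv ≫ (σ.β X).hom ▷ dual X ≫ (α_ X A (dual X)).hom =
      (ρ_ A).hom ≫ (λ_ A).inv ≫ coevl X ▷ A ≫ (α_ X (dual X) A).hom ≫
        X ◁ (σ.β (dual X)).inv := by
  have hnat := σ.naturality (coevl X)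
  rw [σ.monoidal, halfBraiding_unit_hom] at hnat
  rw [← cancel_mono (X ◁ (σ.β (dual X)).hom), ← cancel_mono (α_ X (dual X) A).inv]
  simpa [← MonoidalCategory.whiskerLeft_comp] using hnat

lemma coevr_comp_halfBraiding_inv {A : C} (σ : HalfBraiding A) :
    coevr A ≫ (σ.β (dual A)).inv = coevl A ≫ leftPartialTrace (σ.β A).hom ▷ dual A := by
  dsimp only [leftPartialTrace]
  symm
  calc
    _ = 𝟙 _ ⊗≫ (𝟙_ C ◁ coevl A ≫ coevr A ▷ (A ⊗ dual A)) ⊗≫ dual A ◁ (σ.β A).hom ▷ dual A ⊗≫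
        evl A ▷ (A ⊗ dual A) ⊗≫ 𝟙 _ := by monoidal
    _ = 𝟙 _ ⊗≫ coevr A ⊗≫ dual A ◁ (A ◁ coevl A ≫ (α_ A A (dual A)).inv ≫
        (σ.β A).hom ▷ dual A ≫ (α_ A A (dual A)).hom) ⊗≫ evl A ▷ (A ⊗ dual A) ⊗≫ 𝟙 _ := by
      rw [whisker_exchange]; monoidal
    _ = 𝟙 _ ⊗≫ coevr A ⊗≫ dual A ◁ coevl A ▷ A ⊗≫
        ((dual A ⊗ A) ◁ (σ.β (dual A)).inv ≫ evl A ▷ (A ⊗ dual A)) ⊗≫ 𝟙 _ := by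
      rw [coevl_comp_halfBraiding]; monoidal
    _ = 𝟙 _ ⊗≫ coevr A ⊗≫ (dual A ◁ coevl A ⊗≫ evl A ▷ dual A) ▷ A ⊗≫
        (σ.β (dual A)).inv ⊗≫ 𝟙 _ := by
      rw [whisker_exchange]; monoidal
    _ = _ := by rw [dual_whiskerLeft_coevl_comp_evl]; monoidal

lemma dualBeta_comp_evl {A X : C} (s : A ⊗ X ≅ X ⊗ A) :
    dualBeta A X s ▷ A ≫ (α_ X (dual A) A).hom ≫ X ◁ evl A ≫ (ρ_ X).hom =
      (α_ (dual A) X A).hom ≫ dual A ◁ s.inv ≫ (α_ (dual A) A X).inv ≫ evl A ▷ X ≫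
        (λ_ X).hom := by
  rw [← (tensorRightHomEquiv (dual A ⊗ X) A (dual A) X).symm_apply_apply
    ((α_ (dual A) X A).hom ≫ dual A ◁ s.inv ≫ (α_ (dual A) A X).inv ≫ evl A ▷ X ≫ (λ_ X).hom)]
  change _ = ((ρ_ _).inv ≫ _ ◁ coevl A ≫ (α_ _ _ _).inv ≫ (_ ≫ _) ▷ _) ▷ A ≫
    (α_ _ _ _).hom ≫ X ◁ evl A ≫ (ρ_ _).hom
  congr 2
  dsimp only [dualBeta]
  monoidal

lemma twistHom_dualBeta {A : C} (σ : HalfBraiding A) :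
    twistHom (dual A) (dualBeta A (dual A) (σ.β (dual A))) =
      pdual (leftPartialTrace (σ.β A).hom) := by
  rw [twistHom_eq_rightPartialTrace, rightPartialTrace_dual]
  calc
    _ = 𝟙 _ ⊗≫ dual A ◁ coevr A ⊗≫ (dualBeta A (dual A) (σ.β (dual A)) ▷ A ≫
        (α_ _ _ _).hom ≫ dual A ◁ evl A ≫ (ρ_ _).hom) := by monoidal
    _ = 𝟙 _ ⊗≫ dual A ◁ (coevr A ≫ (σ.β (dual A)).inv) ⊗≫ evl A ▷ dual A ⊗≫ 𝟙 _ := by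
      rw [dualBeta_comp_evl]; monoidal
    _ = _ := by rw [coevr_comp_halfBraiding_inv, pdual]; monoidal

end DualHalfBraiding

section Additive

variable {C : Type u} [Category.{v} C] [Preadditive C] [MonoidalCategory C]
  [MonoidalPreadditive C] [PivotalCat C]

lemma trr_sub {X : C} (f g : X ⟶ X) : trr (f - g) = trr f - trr g := by
  have hwhisker : (f - g) ▷ dual X = f ▷ dual X - g ▷ dual X := (tensorRight (dual X)).map_sub
  simp only [trr, hwhisker, Preadditive.sub_comp, Preadditive.comp_sub]

end Additive

section Linear

variable {k : Type w} [CommRing k] {C : Type u} [Category.{v} C] [Preadditive C]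
  [CategoryTheory.Linear k C] [MonoidalCategory C] [MonoidalPreadditive C]
  [CategoryTheory.MonoidalLinear k C] [PivotalCat C]

lemma trr_smul {X : C} (c : k) (f : X ⟶ X) : trr (c • f) = c • trr f := by
  simp only [trr, MonoidalLinear.smul_whiskerRight, Linear.smul_comp, Linear.comp_smul]

lemma exists_eq_smul_evr {S : C} (hS : IsSimpleObj k S) (f : S ⊗ dual S ⟶ 𝟙_ C) :
    ∃ c : k, f = c • evr S := by
  let transpose := tensorRightHomEquiv S (dual S) S (𝟙_ C)
  obtain ⟨c, hc : c • 𝟙 S = transpose f ≫ (λ_ S).hom⟩ := hS.2 (transpose f ≫ (λ_ S).hom)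
  have htranspose : transpose f = c • (λ_ S).inv := by
    rw [← cancel_mono (λ_ S).hom, ← hc, Linear.smul_comp, Iso.inv_hom_id]
  refine ⟨c, ?_⟩
  calc
    f = transpose.symm (c • (λ_ S).inv) := by rw [← htranspose, Equiv.symm_apply_apply]
    _ = (c • (λ_ S).inv) ▷ dual S ≫ (α_ _ _ _).hom ≫ 𝟙_ C ◁ evr S ≫ (ρ_ _).hom := rfl
    _ = c • ((λ_ S).inv ▷ dual S ≫ (α_ _ _ _).hom ≫ 𝟙_ C ◁ evr S ≫ (ρ_ _).hom) := by
      rw [MonoidalLinear.smul_whiskerRight, Linear.smul_comp]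
    _ = c • evr S := by congr 1; monoidal

lemma smul_eq_zero_of_smul_coevl {X : C} {c : k} (h : c • coevl X = 0) : c • 𝟙 X = 0 := by
  rw [← left_zigzag₁ X, ← Linear.comp_smul, ← Linear.smul_comp, ← MonoidalLinear.smul_whiskerRight,
    h, MonoidalPreadditive.zero_whiskerRight, zero_comp, comp_zero]

end Linear

section PreFusion

variable (k : Type w) [CommRing k] {C : Type u} [Category.{v} C] [Preadditive C]
  [CategoryTheory.Linear k C] [MonoidalCategory C] [MonoidalPreadditive C]
  [CategoryTheory.MonoidalLinear k C] [HasFiniteBiproducts C] [PivotalCat C]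
  [MonoidalKCat k C]

lemma eq_zero_of_comp_to_simple [PreFusionCat k C] {X Y : C} {f : X ⟶ Y}
    (h : ∀ S : C, IsSimpleObj k S → ∀ p : Y ⟶ S, f ≫ p = 0) : f = 0 := by
  obtain ⟨n, S, p, q, hS, hsum, -, -⟩ := PreFusionCat.semisimple (k := k) Y
  rw [← Category.comp_id f, ← hsum, Preadditive.comp_sum]
  exact Finset.sum_eq_zero fun a _ => by rw [← Category.assoc, h _ (hS a), zero_comp]

lemma eq_zero_of_comp_from_simple [PreFusionCat k C] {X Y : C} {f : X ⟶ Y}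
    (h : ∀ S : C, IsSimpleObj k S → ∀ q : S ⟶ X, q ≫ f = 0) : f = 0 := by
  obtain ⟨n, S, p, q, hS, hsum, -, -⟩ := PreFusionCat.semisimple (k := k) X
  rw [← Category.id_comp f, ← hsum, Preadditive.sum_comp]
  exact Finset.sum_eq_zero fun a _ => by rw [Category.assoc, h _ (hS a), comp_zero]

variable {k}

-- `𝟙 → S ⊗ S* → T` with `T` simple vanishes or, up to scalars and `T ≅ 𝟙`, is `coevl S ≫ evr S`.
lemma eq_zero_of_smul_dimr_eq_zero [PreFusionCat k C] {S : C} (hS : IsSimpleObj k S) {c : k}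
    (hc : c • dimr S = 0) : c = 0 := by
  have hdim : dimr S = coevl S ≫ evr S := by
    rw [dimr, trr, id_whiskerRight, Category.id_comp]
  have hcoevl : c • coevl S = 0 := by
    refine eq_zero_of_comp_to_simple k fun T hT p => ?_
    rcases isEmpty_or_nonempty (𝟙_ C ≅ T) with hempty | ⟨⟨e⟩⟩
    · exact PreFusionCat.simple_hom_zero MonoidalKCat.unit_free hT hempty _
    · obtain ⟨d, hd⟩ := exists_eq_smul_evr hS (p ≫ e.inv)
      rw [← cancel_mono e.inv, Category.assoc, hd, Linear.comp_smul, Linear.smul_comp, ← hdim, hc,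
        smul_zero, zero_comp]
  apply hS.1
  simpa only [zero_smul] using smul_eq_zero_of_smul_coevl hcoevl

lemma eq_zero_of_trr_comp_eq_zero_of_simple [PreFusionCat k C] {S T : C} (hS : IsSimpleObj k S)
    (hT : IsSimpleObj k T) {f : S ⟶ T} (hf : ∀ g : T ⟶ S, trr (f ≫ g) = 0) : f = 0 := by
  rcases isEmpty_or_nonempty (S ≅ T) with hempty | ⟨⟨e⟩⟩
  · exact PreFusionCat.simple_hom_zero hS hT hempty f
  · obtain ⟨c, hc : c • 𝟙 S = f ≫ e.inv⟩ := hS.2 (f ≫ e.inv)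
    have hdim : c • dimr S = 0 := by rw [dimr, ← trr_smul, hc, hf]
    rw [← cancel_mono e.inv, ← hc, eq_zero_of_smul_dimr_eq_zero hS hdim, zero_smul, zero_comp]

variable (k)

lemma eq_zero_of_trr_comp_eq_zero [PreFusionCat k C] {X Y : C} {f : X ⟶ Y}
    (hf : ∀ g : Y ⟶ X, trr (f ≫ g) = 0) : f = 0 := by
  refine eq_zero_of_comp_from_simple k fun S hS q => eq_zero_of_comp_to_simple k fun T hT p => ?_
  refine eq_zero_of_trr_comp_eq_zero_of_simple hS hT fun g => ?_
  calc
    trr (((q ≫ f) ≫ p) ≫ g) = trr (q ≫ f ≫ p ≫ g) := by simp only [Category.assoc]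
    _ = trr (f ≫ p ≫ g ≫ q) := by rw [trr_comp_comm]; simp only [Category.assoc]
    _ = 0 := hf _

lemma twistHom_eq_leftPartialTrace [PreFusionCat k C] [SphericalCat C] {A : C}
    (σ : HalfBraiding A) : twistHom A (σ.β A).hom = leftPartialTrace (σ.β A).hom := by
  rw [twistHom_eq_rightPartialTrace, ← sub_eq_zero]
  refine eq_zero_of_trr_comp_eq_zero k fun g => ?_
  rw [Preadditive.sub_comp, trr_sub, trr_rightPartialTrace_comp (σ.naturality g), sub_self]

end PreFusion

end PivotalCat

open PivotalCat in
theorem center_of_spherical_fusion_is_ribbon_general (k : Type w) [CommRing k] (C : Type u)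
    [Category.{v} C] [Preadditive C] [CategoryTheory.Linear k C] [MonoidalCategory C]
    [MonoidalPreadditive C] [CategoryTheory.MonoidalLinear k C]
    [CategoryTheory.Limits.HasFiniteBiproducts C] [PivotalCat C] [MonoidalKCat k C]
    [PreFusionCat k C] [SphericalCat C] (A : C) (σ : HalfBraiding A) :
    pdual (twistHom A (σ.β A).hom) =
      twistHom (dual A) (dualBeta A (dual A) (σ.β (dual A))) := by
  rw [twistHom_eq_leftPartialTrace k σ, twistHom_dualBeta]

open PivotalCat in
/-- For a spherical fusion category `C` over a commutative ring `k`, the center `Z(C)`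
(with its braiding and its pivotal structure) is a ribbon category: for every half
braiding `(A, σ)` of `C`, the dual morphism `(θ_{(A,σ)})* : A* ⟶ A*` of the twist
`θ_{(A,σ)} = (id_A ⊗ ev_r A)(σ_A ⊗ id_{A*})(id_A ⊗ coev_l A) : A ⟶ A` equals the twist
`θ_{(A,σ)*}` of the dual half braiding `(A, σ)* = (A*, σ^∨)`. -/
theorem center_of_spherical_fusion_is_ribbon (k : Type w) [CommRing k] (C : Type u)
    [Category.{v} C] [Preadditive C] [CategoryTheory.Linear k C] [MonoidalCategory C]
    [MonoidalPreadditive C] [CategoryTheory.MonoidalLinear k C]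
    [CategoryTheory.Limits.HasFiniteBiproducts C] [PivotalCat C] [MonoidalKCat k C]
    [PreFusionCat k C] [FusionCat k C] [SphericalCat C]
    (A : C) (σ : HalfBraiding A) :
    pdual (twistHom A (σ.β A).hom) =
      twistHom (dual A) (dualBeta A (dual A) (σ.β (dual A))) :=
  center_of_spherical_fusion_is_ribbon_general k C A σ
end

section
/- Let C be a fusion category over a commutative ring k and I a representative set of its simple objects. Then the pivotal braided category Z(C) admits a coend: the functor Z(C)^op × Z(C) → Z(C), (M,N) ↦ M* ⊗ N, has a coend (C̃, ρ), and the underlying object of C̃, i.e. its image under the forgetful functor Z(C) → C, is isomorphic to ⊕_{i,j∈I} i* ⊗ j* ⊗ i ⊗ j. -/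
open CategoryTheory CategoryTheory.Limits MonoidalCategory

universe v u w

/-!
Fix an object `X`. As `C` is semisimple, natural families `Y ⊗ W ⟶ X ⊗ Y` are determined by
arbitrary components at the simple objects, hence are represented by `T X = ⨁ j, ᘁj ⊗ X ⊗ j`. This
universal property equips `T X` with a half braiding that makes it cofree on `X`, so that `T` is
right adjoint to the forgetful functor `U` of the center.

Dinatural families `Mᘁ ⊗ M ⟶ W` in `C`, indexed by the objects `M` of the center, are natural
families `U M ⟶ U M ⊗ W`. Transposed along the adjunction they become natural families
`T X ⟶ X ⊗ W`, which are represented by `⨁ i, iᘁ ⊗ T i`, again by semisimplicity. So this object is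
a coend in `C`, and it is a coend in the center since tensoring in a rigid category preserves
colimits, whence colimits of underlying objects inherit half braidings.
-/

namespace CenterCoend

section Semisimple

/-- A semisimple basis of a `k`-linear category: a family of objects whose endomorphisms are
scalars, without nonzero morphisms between different members, and such that every object is a
retract of a finite direct sum of members. -/
structure IsSemisimpleBasis (k : Type*) [Semiring k] {C : Type*} [Category* C] [Preadditive C]
    [CategoryTheory.Linear k C] {ι : Type*} (s : ι → C) : Prop where
  exists_decomposition (X : C) : ∃ (n : ℕ) (o : Fin n → ι) (p : ∀ a, X ⟶ s (o a))
    (q : ∀ a, s (o a) ⟶ X), ∑ a, p a ≫ q a = 𝟙 X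
  hom_eq_zero {i j : ι} (hij : i ≠ j) (f : s i ⟶ s j) : f = 0
  exists_smul_id {i : ι} (f : s i ⟶ s i) : ∃ c : k, f = c • 𝟙 (s i)

namespace IsSemisimpleBasis

variable {k : Type*} [Semiring k] {C : Type*} [Category* C] [Preadditive C]
  [CategoryTheory.Linear k C] {ι : Type*} {s : ι → C}
  {D : Type*} [Category* D] [Preadditive D] {P Q : C ⥤ D}

theorem natTrans_ext (hs : IsSemisimpleBasis k s) [Q.Additive] {t t' : P ⟶ Q}
    (h : ∀ i, t.app (s i) = t'.app (s i)) :
    t = t' := by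
  ext X
  obtain ⟨n, o, p, q, hpq⟩ := hs.exists_decomposition X
  have app_eq_sum (t : P ⟶ Q) : t.app X = ∑ a, P.map (p a) ≫ t.app (s (o a)) ≫ Q.map (q a) := by
    simp only [NatTrans.naturality_assoc, ← Preadditive.comp_sum, ← Q.map_comp, ← Q.map_sum, hpq,
      Q.map_id, Category.comp_id]
  rw [app_eq_sum t, app_eq_sum t']
  simp only [h]

variable [CategoryTheory.Linear k D] [P.Additive] [P.Linear k] [Q.Additive] [Q.Linear k]

theorem naturality_of_basis (hs : IsSemisimpleBasis k s)
    (t : ∀ i, P.obj (s i) ⟶ Q.obj (s i)) {i j : ι} (f : s i ⟶ s j) :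
    P.map f ≫ t j = t i ≫ Q.map f := by
  rcases eq_or_ne i j with rfl | hij
  · obtain ⟨c, rfl⟩ := hs.exists_smul_id f
    simp
  · simp [hs.hom_eq_zero hij f]

theorem exists_natTrans (hs : IsSemisimpleBasis k s) (t : ∀ i, P.obj (s i) ⟶ Q.obj (s i)) :
    ∃ T : P ⟶ Q, ∀ i, T.app (s i) = t i := by
  choose n o p q hpq using hs.exists_decomposition
  have natural {i j : ι} (f : s i ⟶ s j) : P.map f ≫ t j = t i ≫ Q.map f :=
    hs.naturality_of_basis t f
  -- naturality against maps from basis members suffices: by `hpq` they generate every object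
  let T (X : C) : P.obj X ⟶ Q.obj X := ∑ a, P.map (p X a) ≫ t (o X a) ≫ Q.map (q X a)
  have comp_T {i : ι} {X : C} (f : s i ⟶ X) : P.map f ≫ T X = t i ≫ Q.map f := by
    simp only [T, Preadditive.comp_sum, ← P.map_comp_assoc]
    simp only [reassoc_of% natural, ← Q.map_comp, Category.assoc, ← Preadditive.comp_sum,
      ← Q.map_sum, hpq, Category.comp_id]
  refine ⟨⟨T, fun X Y f => ?_⟩, fun i => by simpa using comp_T (𝟙 (s i))⟩
  calc P.map f ≫ T Y
      = P.map (∑ a, p X a ≫ q X a) ≫ P.map f ≫ T Y := by simp [hpq]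
    _ = ∑ a, P.map (p X a) ≫ P.map (q X a ≫ f) ≫ T Y := by simp [Preadditive.sum_comp]
    _ = T X ≫ Q.map f := by simp only [comp_T, T, Preadditive.sum_comp, Q.map_comp, Category.assoc]

theorem bijective_natTrans_app (hs : IsSemisimpleBasis k s) :
    Function.Bijective fun (t : P ⟶ Q) (i : ι) => t.app (s i) :=
  ⟨fun _ _ h => hs.natTrans_ext (congrFun h), fun t =>
    let ⟨T, hT⟩ := hs.exists_natTrans t; ⟨T, funext hT⟩⟩

end IsSemisimpleBasis

end Semisimple

section Biproduct

variable {C : Type*} [Category* C] [Preadditive C] [HasFiniteBiproducts C] {ι : Type*} [Finite ι]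

theorem bijective_comp_biproduct_π (f : ι → C) (W : C) :
    Function.Bijective fun (h : W ⟶ ⨁ f) i => h ≫ biproduct.π f i :=
  ⟨fun _ _ e => biproduct.hom_ext _ _ (congrFun e), fun p => ⟨biproduct.lift p, by simp⟩⟩

theorem bijective_biproduct_ι_comp (f : ι → C) (W : C) :
    Function.Bijective fun (h : ⨁ f ⟶ W) i => biproduct.ι f i ≫ h :=
  ⟨fun _ _ e => biproduct.hom_ext' _ _ (congrFun e), fun p => ⟨biproduct.desc p, by simp⟩⟩

end Biproduct

section TensorEnd

variable {C : Type u} [Category.{v} C] [MonoidalCategory C]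

/-- `θ` exhibits `T` as the end `∫_Y ᘁY ⊗ G Y`: the natural families `Y ⊗ W ⟶ G Y` are the
morphisms `W ⟶ T`. -/
def IsTensorEnd {G : C ⥤ C} {T : C} (θ : tensorRight T ⟶ G) : Prop :=
  ∀ W : C, Function.Bijective fun h : W ⟶ T => (tensoringRight C).map h ≫ θ

namespace IsTensorEnd

variable {G : C ⥤ C} {T : C} {θ : tensorRight T ⟶ G}

theorem hom_ext (hθ : IsTensorEnd θ) {W : C} {g h : W ⟶ T}
    (e : ∀ Y, Y ◁ g ≫ θ.app Y = Y ◁ h ≫ θ.app Y) : g = h :=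
  (hθ W).injective (NatTrans.ext (funext e))

theorem exists_hom (hθ : IsTensorEnd θ) {W : C} (t : tensorRight W ⟶ G) :
    ∃ h : W ⟶ T, ∀ Y, Y ◁ h ≫ θ.app Y = t.app Y :=
  let ⟨h, e⟩ := (hθ W).surjective t
  ⟨h, NatTrans.congr_app e⟩

theorem comp_iso (hθ : IsTensorEnd θ) {G' : C ⥤ C} (e : G ≅ G') : IsTensorEnd (θ ≫ e.hom) :=
  fun W => by
    simpa [Function.comp_def] using (e.homToEquiv (Z := tensorRight W)).bijective.comp (hθ W)

theorem exists_iso (hθ : IsTensorEnd θ) {T' : C} {θ' : tensorRight T' ⟶ G}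
    (hθ' : IsTensorEnd θ') : ∃ e : T ≅ T', ∀ Y, Y ◁ e.hom ≫ θ'.app Y = θ.app Y := by
  obtain ⟨f, hf⟩ := hθ'.exists_hom θ
  obtain ⟨g, hg⟩ := hθ.exists_hom θ'
  exact ⟨⟨f, g, hθ.hom_ext fun Y => by simp [hf, hg], hθ'.hom_ext fun Y => by simp [hf, hg]⟩, hf⟩

theorem tensorObj_right (hθ : IsTensorEnd θ) (Z Z' : C) [ExactPairing Z' Z] :
    IsTensorEnd ((tensorRightTensor T Z).hom ≫ Functor.whiskerRight θ (tensorRight Z)) := by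
  intro W
  let e : (tensorRight (W ⊗ Z') ⟶ G) ≃ (tensorRight W ⟶ G ⋙ tensorRight Z) :=
    ((tensorRightTensor W Z').homCongr (Iso.refl G)).trans
      (((tensorRightAdjunction Z' Z).whiskerRight C).homEquiv _ _)
  convert e.bijective.comp
    ((hθ (W ⊗ Z')).comp (tensorRightHomEquiv W Z' Z T).symm.bijective) using 2 with h
  apply e.symm.injective
  rw [Function.comp_apply, Equiv.symm_apply_apply]
  ext Y
  have slide (t : Y ⊗ T ⟶ G.obj Y) :
      (α_ Y T Z).inv ▷ Z' ≫ t ▷ Z ▷ Z' ≫ (α_ _ Z Z').hom ≫ G.obj Y ◁ ε_ Z' Z ≫ (ρ_ _).hom =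
        (α_ _ _ _).hom ≫ Y ◁ (α_ T Z Z').hom ≫ Y ◁ T ◁ ε_ Z' Z ≫ (α_ _ _ _).inv ≫
          (ρ_ _).hom ≫ t := by
    calc _ = 𝟙 _ ⊗≫ (t ▷ (Z ⊗ Z') ≫ G.obj Y ◁ ε_ Z' Z) ⊗≫ 𝟙 _ := by monoidal
      _ = _ := by rw [← whisker_exchange]; monoidal
  simp [e, Adjunction.homEquiv, tensorRightAdjunction, tensorRightHomEquiv, slide]

theorem tensorObj_left (hθ : IsTensorEnd θ) (Z Z' : C) [ExactPairing Z Z'] :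
    IsTensorEnd ((tensorRightTensor Z T).hom ≫ Functor.whiskerLeft (tensorRight Z) θ) := by
  intro W
  let e : (tensorRight (Z' ⊗ W) ⟶ G) ≃ (tensorRight W ⟶ tensorRight Z ⋙ G) :=
    ((tensorRightTensor Z' W).homCongr (Iso.refl G)).trans
      (((tensorRightAdjunction Z Z').whiskerLeft C).homEquiv _ _)
  convert e.bijective.comp
    ((hθ (Z' ⊗ W)).comp (tensorLeftHomEquiv W Z Z' T).symm.bijective) using 2 with h
  apply e.symm.injective
  rw [Function.comp_apply, Equiv.symm_apply_apply]
  ext Y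
  obtain ⟨counit, counit_eq⟩ : ∃ f : (Y ⊗ Z') ⊗ Z ⟶ Y,
      (tensorRightHomEquiv (Y ⊗ Z') Z Z' Y).symm (𝟙 (Y ⊗ Z')) = f := ⟨_, rfl⟩
  have natural : θ.app ((Y ⊗ Z') ⊗ Z) ≫ G.map counit = counit ▷ T ≫ θ.app Y :=
    (θ.naturality counit).symm
  have counit_whiskerRight : (α_ Y Z' (Z ⊗ T)).inv ≫ (α_ (Y ⊗ Z') Z T).inv ≫ counit ▷ T =
      Y ◁ (α_ Z' Z T).inv ≫ Y ◁ ε_ Z Z' ▷ T ≫ Y ◁ (λ_ T).hom := by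
    simp [← counit_eq, tensorRightHomEquiv]
  simp [e, Adjunction.homEquiv, tensorRightAdjunction, tensorLeftHomEquiv, counit_eq, natural,
    reassoc_of% counit_whiskerRight]

end IsTensorEnd

theorem exists_isTensorEnd {k : Type*} [Semiring k] [Preadditive C] [CategoryTheory.Linear k C]
    [MonoidalPreadditive C] [MonoidalLinear k C] [HasFiniteBiproducts C] [LeftRigidCategory C]
    {ι : Type*} [Finite ι] {s : ι → C} (hs : IsSemisimpleBasis k s)
    (G : C ⥤ C) [G.Additive] [G.Linear k] :
    ∃ θ : tensorRight (⨁ fun i => (ᘁ(s i) : C) ⊗ G.obj (s i)) ⟶ G, IsTensorEnd θ := by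
  let pairing (i : ι) (W : C) : (W ⟶ (ᘁ(s i) : C) ⊗ G.obj (s i)) ≃ (s i ⊗ W ⟶ G.obj (s i)) :=
    (tensorLeftHomEquiv W (ᘁ(s i)) (s i) (G.obj (s i))).symm
  obtain ⟨θ, hθ⟩ := hs.exists_natTrans (P := tensorRight (⨁ fun i => (ᘁ(s i) : C) ⊗ G.obj (s i)))
    (Q := G) fun i => pairing i _ (biproduct.π _ i)
  refine ⟨θ, fun W => (Function.Bijective.of_comp_iff' hs.bijective_natTrans_app _).1 ?_⟩
  have app_eq (h : W ⟶ ⨁ fun i => (ᘁ(s i) : C) ⊗ G.obj (s i)) (i : ι) :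
      s i ◁ h ≫ θ.app (s i) = pairing i W (h ≫ biproduct.π _ i) := by
    rw [hθ, tensorLeftHomEquiv_symm_naturality]
  change Function.Bijective fun h i => s i ◁ h ≫ θ.app (s i)
  simp only [app_eq]
  exact (Equiv.piCongrRight (pairing · W)).bijective.comp
    (bijective_comp_biproduct_π _ W)

/-- `φ` exhibits `K` as the coend `∫^B (Q B)ᘁ ⊗ P B`: the natural families `P B ⟶ Q B ⊗ W` are the
morphisms `K ⟶ W`. -/
def IsTensorCoend {B : Type*} [Category* B] {P Q : B ⥤ C} {K : C} (φ : P ⟶ Q ⋙ tensorRight K) :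
    Prop :=
  ∀ W : C, Function.Bijective fun h : K ⟶ W =>
    φ ≫ Functor.whiskerLeft Q ((tensoringRight C).map h)

theorem exists_isTensorCoend {k : Type*} [Semiring k] [Preadditive C] [CategoryTheory.Linear k C]
    [MonoidalPreadditive C] [MonoidalLinear k C] [HasFiniteBiproducts C] [RightRigidCategory C]
    {ι : Type*} [Finite ι] {s : ι → C} (hs : IsSemisimpleBasis k s)
    (P : C ⥤ C) [P.Additive] [P.Linear k] :
    ∃ φ : P ⟶ 𝟭 C ⋙ tensorRight (⨁ fun i => (s i)ᘁ ⊗ P.obj (s i)), IsTensorCoend φ := by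
  let pairing (i : ι) (W : C) : ((s i)ᘁ ⊗ P.obj (s i) ⟶ W) ≃ (P.obj (s i) ⟶ s i ⊗ W) :=
    tensorLeftHomEquiv (P.obj (s i)) (s i) (s i)ᘁ W
  obtain ⟨φ, hφ⟩ := hs.exists_natTrans (P := P)
    (Q := 𝟭 C ⋙ tensorRight (⨁ fun i => (s i)ᘁ ⊗ P.obj (s i))) fun i =>
      pairing i _ (biproduct.ι (fun i => (s i)ᘁ ⊗ P.obj (s i)) i)
  refine ⟨φ, fun W => (Function.Bijective.of_comp_iff' hs.bijective_natTrans_app _).1 ?_⟩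
  have app_eq (h : (⨁ fun i => (s i)ᘁ ⊗ P.obj (s i)) ⟶ W) (i : ι) :
      φ.app (s i) ≫ s i ◁ h = pairing i W (biproduct.ι (fun i => (s i)ᘁ ⊗ P.obj (s i)) i ≫ h) := by
    rw [hφ, tensorLeftHomEquiv_naturality]
  change Function.Bijective fun h i => φ.app (s i) ≫ s i ◁ h
  simp only [app_eq]
  exact (Equiv.piCongrRight (pairing · W)).bijective.comp
    (bijective_biproduct_ι_comp _ W)

end TensorEnd

section Cofree

variable {C : Type u} [Category.{v} C] [MonoidalCategory C] {X T : C}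

theorem halfBraiding_inv_tensorObj {A : C} (a : HalfBraiding A) (Y Z : C) :
    (a.β (Y ⊗ Z)).inv = (α_ Y Z A).hom ≫ Y ◁ (a.β Z).inv ≫ (α_ Y A Z).inv ≫
      (a.β Y).inv ▷ Z ≫ (α_ A Y Z).hom := by
  rw [← cancel_epi (a.β (Y ⊗ Z)).hom, Iso.hom_inv_id, a.monoidal]
  simp

/-- A component of a natural transformation `tensorRight T ⟶ tensorLeft X`, with the tensor
products in its source and target spelled out. -/
def component (θ : tensorRight T ⟶ tensorLeft X) (Y : C) : Y ⊗ T ⟶ X ⊗ Y := θ.app Y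

variable {θ : tensorRight T ⟶ tensorLeft X}

theorem component_naturality {Y Y' : C} (f : Y ⟶ Y') :
    f ▷ T ≫ component θ Y' = component θ Y ≫ X ◁ f :=
  θ.naturality f

/-- The component at the unit object, as a morphism `T ⟶ X`: the counit of the cofree object. -/
def cofreeCounit (θ : tensorRight T ⟶ tensorLeft X) : T ⟶ X :=
  (λ_ T).inv ≫ component θ (𝟙_ C) ≫ (ρ_ X).hom

namespace IsTensorEnd

variable [RigidCategory C]

theorem tensorLeft_hom_ext (hθ : IsTensorEnd θ) {W Z : C} {g h : W ⟶ Z ⊗ T}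
    (e : ∀ Y, Y ◁ g ≫ (α_ Y Z T).inv ≫ component θ (Y ⊗ Z) =
      Y ◁ h ≫ (α_ Y Z T).inv ≫ component θ (Y ⊗ Z)) : g = h :=
  (hθ.tensorObj_left Z (Zᘁ)).hom_ext e

theorem exists_braiding (hθ : IsTensorEnd θ) (Z : C) :
    ∃ σ : T ⊗ Z ≅ Z ⊗ T, ∀ Y, Y ◁ σ.hom ≫ (α_ Y Z T).inv ≫ component θ (Y ⊗ Z) =
      (α_ Y T Z).inv ≫ component θ Y ▷ Z ≫ (α_ X Y Z).hom := by
  -- both `T ⊗ Z` and `Z ⊗ T` represent the natural families `Y ⊗ W ⟶ X ⊗ Y ⊗ Z`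
  let reassociate : tensorLeft X ⋙ tensorRight Z ≅ tensorRight Z ⋙ tensorLeft X :=
    NatIso.ofComponents (fun Y => α_ X Y Z)
  obtain ⟨σ, hσ⟩ := ((hθ.tensorObj_right Z (ᘁZ)).comp_iso reassociate).exists_iso
    (hθ.tensorObj_left Z (Zᘁ))
  exact ⟨σ, fun Y => (hσ Y).trans (Category.assoc _ _ _)⟩

theorem exists_halfBraiding (hθ : IsTensorEnd θ) :
    ∃ b : HalfBraiding T, ∀ Y Z, Y ◁ (b.β Z).hom ≫ (α_ Y Z T).inv ≫ component θ (Y ⊗ Z) =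
      (α_ Y T Z).inv ≫ component θ Y ▷ Z ≫ (α_ X Y Z).hom := by
  choose σ hσ using hθ.exists_braiding
  refine ⟨⟨σ, fun U V => hθ.tensorLeft_hom_ext fun Y => ?_,
    fun {U V} f => hθ.tensorLeft_hom_ext fun Y => ?_⟩, fun Y Z => hσ Z Y⟩
  · rw [hσ]
    calc (α_ Y T (U ⊗ V)).inv ≫ component θ Y ▷ (U ⊗ V) ≫ (α_ X Y (U ⊗ V)).hom
        = 𝟙 _ ⊗≫ ((α_ Y T U).inv ≫ component θ Y ▷ U ≫ (α_ X Y U).hom) ▷ V ⊗≫ 𝟙 _ := by monoidal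
      _ = 𝟙 _ ⊗≫ Y ◁ (σ U).hom ▷ V ⊗≫
            ((α_ (Y ⊗ U) T V).inv ≫ component θ (Y ⊗ U) ▷ V ≫ (α_ X (Y ⊗ U) V).hom) ⊗≫ 𝟙 _ := by
        rw [← hσ]; monoidal
      _ = 𝟙 _ ⊗≫ Y ◁ (σ U).hom ▷ V ⊗≫ Y ◁ U ◁ (σ V).hom ⊗≫
            (component θ ((Y ⊗ U) ⊗ V) ≫ X ◁ (α_ Y U V).hom) := by
        rw [← hσ]; monoidal
      _ = _ := by rw [← component_naturality]; monoidal
  · rw [MonoidalCategory.whiskerLeft_comp_assoc, hσ, MonoidalCategory.whiskerLeft_comp_assoc,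
      associator_inv_naturality_middle_assoc, component_naturality, reassoc_of% (hσ U)]
    rw [associator_inv_naturality_right_assoc, whisker_exchange_assoc, associator_naturality_right]

/-- The half braiding that the universal property of `T` forces upon it. -/
noncomputable def halfBraiding (hθ : IsTensorEnd θ) : HalfBraiding T :=
  hθ.exists_halfBraiding.choose

theorem whiskerLeft_halfBraiding_component (hθ : IsTensorEnd θ) (Y Z : C) :
    Y ◁ (hθ.halfBraiding.β Z).hom ≫ (α_ Y Z T).inv ≫ component θ (Y ⊗ Z) =
      (α_ Y T Z).inv ≫ component θ Y ▷ Z ≫ (α_ X Y Z).hom :=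
  hθ.exists_halfBraiding.choose_spec Y Z

/-- The object `T` of the center, cofree on `X`. -/
noncomputable def cofree (hθ : IsTensorEnd θ) : Center C := ⟨T, hθ.halfBraiding⟩

theorem halfBraiding_component (hθ : IsTensorEnd θ) (Y : C) :
    (hθ.halfBraiding.β Y).hom ≫ component θ Y = cofreeCounit θ ▷ Y := by
  have unit := hθ.whiskerLeft_halfBraiding_component (𝟙_ C) Y
  have natural := component_naturality (θ := θ) (λ_ Y).hom
  calc (hθ.halfBraiding.β Y).hom ≫ component θ Y
      = 𝟙 _ ⊗≫ 𝟙_ C ◁ (hθ.halfBraiding.β Y).hom ⊗≫ ((λ_ Y).hom ▷ T ≫ component θ Y) := by monoidal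
    _ = 𝟙 _ ⊗≫ (𝟙_ C ◁ (hθ.halfBraiding.β Y).hom ≫ (α_ _ Y T).inv ≫ component θ (𝟙_ C ⊗ Y)) ⊗≫
          𝟙 _ := by rw [natural]; monoidal
    _ = cofreeCounit θ ▷ Y := by rw [unit, cofreeCounit]; monoidal

theorem component_of_comm (hθ : IsTensorEnd θ) {A : C} (a : HalfBraiding A) {h : A ⟶ T}
    (comm : ∀ Y, h ▷ Y ≫ (hθ.halfBraiding.β Y).hom = (a.β Y).hom ≫ Y ◁ h) (Y : C) :
    (a.β Y).hom ≫ Y ◁ h ≫ component θ Y = (h ≫ cofreeCounit θ) ▷ Y := by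
  rw [← reassoc_of% comm Y, comp_whiskerRight, hθ.halfBraiding_component]

theorem comm_of_component (hθ : IsTensorEnd θ) {A : C} (a : HalfBraiding A) {h : A ⟶ T}
    {f : A ⟶ X} (h_component : ∀ Y, Y ◁ h ≫ component θ Y = (a.β Y).inv ≫ f ▷ Y) (Z : C) :
    h ▷ Z ≫ (hθ.halfBraiding.β Z).hom = (a.β Z).hom ≫ Z ◁ h := by
  refine hθ.tensorLeft_hom_ext fun Y => ?_
  calc Y ◁ (h ▷ Z ≫ (hθ.halfBraiding.β Z).hom) ≫ (α_ Y Z T).inv ≫ component θ (Y ⊗ Z)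
      = (α_ Y A Z).inv ≫ (Y ◁ h ≫ component θ Y) ▷ Z ≫ (α_ X Y Z).hom := by
        rw [MonoidalCategory.whiskerLeft_comp_assoc, hθ.whiskerLeft_halfBraiding_component]
        simp
    _ = Y ◁ (a.β Z).hom ≫ (α_ Y Z A).inv ≫ (a.β (Y ⊗ Z)).inv ≫ f ▷ (Y ⊗ Z) := by
        rw [h_component, halfBraiding_inv_tensorObj]
        simp
    _ = Y ◁ ((a.β Z).hom ≫ Z ◁ h) ≫ (α_ Y Z T).inv ≫ component θ (Y ⊗ Z) := by
        rw [← h_component]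
        simp

theorem exists_hom_cofree (hθ : IsTensorEnd θ) {A : C} (a : HalfBraiding A) (f : A ⟶ X) :
    ∃ h : A ⟶ T, (∀ Y, h ▷ Y ≫ (hθ.halfBraiding.β Y).hom = (a.β Y).hom ≫ Y ◁ h) ∧
      h ≫ cofreeCounit θ = f := by
  let family : tensorRight A ⟶ tensorLeft X :=
    { app := fun Y => (a.β Y).inv ≫ f ▷ Y
      naturality := fun _ _ g => by
        change g ▷ A ≫ (a.β _).inv ≫ f ▷ _ = ((a.β _).inv ≫ f ▷ _) ≫ X ◁ g
        rw [Category.assoc, ← whisker_exchange, Iso.eq_inv_comp, ← a.naturality_assoc,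
          Iso.hom_inv_id_assoc] }
  obtain ⟨h, h_component⟩ := hθ.exists_hom family
  have comm := hθ.comm_of_component a h_component
  refine ⟨h, comm, (whiskerRight_iff _ _).1 ?_⟩
  rw [← hθ.component_of_comm a comm]
  exact (cancel_epi (a.β (𝟙_ C)).hom).2 (h_component (𝟙_ C)) |>.trans (Iso.hom_inv_id_assoc _ _)

theorem bijective_comp_cofreeCounit (hθ : IsTensorEnd θ) (M : Center C) :
    Function.Bijective fun g : M ⟶ hθ.cofree => g.f ≫ cofreeCounit θ := by
  refine ⟨fun g h e => Center.ext _ _ <| hθ.hom_ext fun Y => (cancel_epi (M.2.β Y).hom).1 ?_,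
    fun f => ?_⟩
  · exact (hθ.component_of_comm M.2 g.comm Y).trans <|
      (congrArg (· ▷ Y) e).trans (hθ.component_of_comm M.2 h.comm Y).symm
  · obtain ⟨h, comm, rfl⟩ := hθ.exists_hom_cofree M.2 f
    exact ⟨⟨h, comm⟩, rfl⟩

end IsTensorEnd

section Adjunction

variable [RigidCategory C] {T : C → C} {θ : ∀ X, tensorRight (T X) ⟶ tensorLeft X}

/-- The universal property of the cofree objects. -/
noncomputable def cofreeHomEquiv (hθ : ∀ X, IsTensorEnd (θ X)) (M : Center C) (X : C) :
    ((Center.forget C).obj M ⟶ X) ≃ (M ⟶ (hθ X).cofree) :=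
  (Equiv.ofBijective _ ((hθ X).bijective_comp_cofreeCounit M)).symm

theorem cofreeHomEquiv_comp_cofreeCounit (hθ : ∀ X, IsTensorEnd (θ X)) {M : Center C} {X : C}
    (g : (Center.forget C).obj M ⟶ X) :
    (cofreeHomEquiv hθ M X g).f ≫ cofreeCounit (θ X) = g :=
  (cofreeHomEquiv hθ M X).symm_apply_apply g

theorem cofreeHomEquiv_naturality (hθ : ∀ X, IsTensorEnd (θ X)) (M N : Center C) (X : C)
    (f : M ⟶ N) (g : (Center.forget C).obj N ⟶ X) :
    cofreeHomEquiv hθ M X ((Center.forget C).map f ≫ g) = f ≫ cofreeHomEquiv hθ N X g :=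
  (Equiv.symm_apply_eq _).2 <|
    (congrArg (f.f ≫ ·) (cofreeHomEquiv_comp_cofreeCounit hθ g).symm).trans
      (Category.assoc _ _ _).symm

/-- The cofree objects of the center as a functor. -/
noncomputable def cofreeFunctor (hθ : ∀ X, IsTensorEnd (θ X)) : C ⥤ Center C :=
  Adjunction.rightAdjointOfEquiv (cofreeHomEquiv hθ) (cofreeHomEquiv_naturality hθ)

/-- The adjunction between the forgetful functor of the center and the cofree functor. -/
noncomputable def cofreeAdjunction (hθ : ∀ X, IsTensorEnd (θ X)) :
    Center.forget C ⊣ cofreeFunctor hθ :=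
  Adjunction.adjunctionOfEquivRight _ _

/-- The action of the cofree functor on a morphism, as a morphism of `C`. -/
noncomputable def cofreeMap (hθ : ∀ X, IsTensorEnd (θ X)) {X X' : C} (f : X ⟶ X') : T X ⟶ T X' :=
  ((cofreeFunctor hθ).map f).f

theorem cofreeMap_comp_cofreeCounit (hθ : ∀ X, IsTensorEnd (θ X)) {X X' : C} (f : X ⟶ X') :
    cofreeMap hθ f ≫ cofreeCounit (θ X') = cofreeCounit (θ X) ≫ f :=
  (cofreeHomEquiv_comp_cofreeCounit hθ _).trans (congrArg (· ≫ f) (Category.id_comp _))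

theorem whiskerLeft_cofreeMap_component (hθ : ∀ X, IsTensorEnd (θ X)) {X X' : C}
    (f : X ⟶ X') (Y : C) :
    Y ◁ cofreeMap hθ f ≫ component (θ X') Y = component (θ X) Y ≫ f ▷ Y := by
  rw [← cancel_epi ((hθ X).halfBraiding.β Y).hom,
    (hθ X').component_of_comm (h := cofreeMap hθ f) (hθ X).halfBraiding
      ((cofreeFunctor hθ).map f).comm,
    cofreeMap_comp_cofreeCounit, comp_whiskerRight, ← (hθ X).halfBraiding_component, Category.assoc]

theorem cofreeMap_eq (hθ : ∀ X, IsTensorEnd (θ X)) {X X' : C} {f : X ⟶ X'} {h : T X ⟶ T X'}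
    (e : ∀ Y, Y ◁ h ≫ component (θ X') Y = component (θ X) Y ≫ f ▷ Y) : cofreeMap hθ f = h :=
  (hθ X').hom_ext fun Y => (whiskerLeft_cofreeMap_component hθ f Y).trans (e Y).symm

theorem cofreeMap_add [Preadditive C] [MonoidalPreadditive C] (hθ : ∀ X, IsTensorEnd (θ X))
    {X X' : C} (f g : X ⟶ X') : cofreeMap hθ (f + g) = cofreeMap hθ f + cofreeMap hθ g :=
  cofreeMap_eq hθ fun Y => by simp [Preadditive.add_comp, whiskerLeft_cofreeMap_component]

theorem cofreeMap_smul {k : Type*} [Semiring k] [Preadditive C] [MonoidalPreadditive C]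
    [CategoryTheory.Linear k C] [MonoidalLinear k C] (hθ : ∀ X, IsTensorEnd (θ X)) {X X' : C}
    (c : k) (f : X ⟶ X') : cofreeMap hθ (c • f) = c • cofreeMap hθ f :=
  cofreeMap_eq hθ fun Y => by simp [whiskerLeft_cofreeMap_component]

instance cofreeFunctor_comp_forget_additive [Preadditive C] [MonoidalPreadditive C]
    (hθ : ∀ X, IsTensorEnd (θ X)) : (cofreeFunctor hθ ⋙ Center.forget C).Additive where
  map_add := cofreeMap_add hθ _ _

instance cofreeFunctor_comp_forget_linear {k : Type*} [Semiring k] [Preadditive C]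
    [MonoidalPreadditive C] [CategoryTheory.Linear k C] [MonoidalLinear k C]
    (hθ : ∀ X, IsTensorEnd (θ X)) : (cofreeFunctor hθ ⋙ Center.forget C).Linear k where
  map_smul f c := cofreeMap_smul hθ c f

end Adjunction

end Cofree

section Creation

variable {C : Type u} [Category.{v} C] [MonoidalCategory C]

/-- The half braidings with `X`, assembled into a natural isomorphism over the center. -/
def centerBraiding (X : C) :
    Center.forget C ⋙ tensorRight X ≅ Center.forget C ⋙ tensorLeft X :=
  NatIso.ofComponents (fun M => M.2.β X) (fun f => f.comm X)

variable {J : Type*} [Category* J] {F : J ⥤ Center C} {c : Cocone (F ⋙ Center.forget C)}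

/-- A leg of a cocone over the underlying objects of a diagram in the center. The source is
spelled out because `(F ⋙ Center.forget C).obj j` hides that it carries a half braiding. -/
def leg (c : Cocone (F ⋙ Center.forget C)) (j : J) : (F.obj j).1 ⟶ c.pt := c.ι.app j

theorem tensorRight_hom_ext_of_isColimit [∀ X : C, PreservesColimitsOfShape J (tensorRight X)]
    (hc : IsColimit c) {X Y : C} {f g : c.pt ⊗ X ⟶ Y}
    (h : ∀ j, leg c j ▷ X ≫ f = leg c j ▷ X ≫ g) : f = g :=
  (isColimitOfPreserves (tensorRight X) hc).hom_ext h

variable [∀ X : C, PreservesColimitsOfShape J (tensorLeft X)]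
  [∀ X : C, PreservesColimitsOfShape J (tensorRight X)] (hc : IsColimit c)

/-- The half braiding with `X` induced on a colimit of underlying objects of central objects. -/
noncomputable def colimitBraiding (X : C) : c.pt ⊗ X ≅ X ⊗ c.pt :=
  (isColimitOfPreserves (tensorRight X) hc).coconePointsIsoOfNatIso
    (isColimitOfPreserves (tensorLeft X) hc) (Functor.isoWhiskerLeft F (centerBraiding X))

theorem leg_colimitBraiding (X : C) (j : J) :
    leg c j ▷ X ≫ (colimitBraiding hc X).hom = ((F.obj j).2.β X).hom ≫ X ◁ leg c j :=
  (isColimitOfPreserves (tensorRight X) hc).comp_coconePointsIsoOfNatIso_hom _ _ j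

/-- The half braiding of a colimit of underlying objects of central objects. -/
noncomputable def colimitHalfBraiding : HalfBraiding c.pt where
  β := colimitBraiding hc
  monoidal X Y := tensorRight_hom_ext_of_isColimit hc fun j => by
    rw [leg_colimitBraiding, (F.obj j).2.monoidal]
    calc _ = (α_ _ _ _).inv ≫ ((F.obj j).2.β X).hom ▷ Y ≫ (α_ _ _ _).hom ≫
          X ◁ (((F.obj j).2.β Y).hom ≫ Y ◁ leg c j) ≫ (α_ _ _ _).inv := by simp
      _ = (α_ _ _ _).inv ≫ (((F.obj j).2.β X).hom ≫ X ◁ leg c j) ▷ Y ≫ (α_ _ _ _).hom ≫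
          X ◁ (colimitBraiding hc Y).hom ≫ (α_ _ _ _).inv := by
        rw [← leg_colimitBraiding hc]; simp
      _ = _ := by rw [← leg_colimitBraiding hc]; simp
  naturality f := tensorRight_hom_ext_of_isColimit hc fun j => by
    rw [← whisker_exchange_assoc, leg_colimitBraiding, (F.obj j).2.naturality_assoc,
      reassoc_of% leg_colimitBraiding hc, whisker_exchange]

/-- The lift to the center of a colimit cocone of underlying objects. -/
noncomputable def centerCocone : Cocone F where
  pt := ⟨c.pt, colimitHalfBraiding hc⟩
  ι :=
    { app := fun j => ⟨leg c j, fun X => leg_colimitBraiding hc X j⟩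
      naturality := fun _ _ f => Center.ext _ _ (c.ι.naturality f) }

theorem comm_of_leg_comp_eq {M : Center C} {d : c.pt ⟶ M.1} (g : ∀ j, F.obj j ⟶ M)
    (h : ∀ j, leg c j ≫ d = (g j).f) (X : C) :
    d ▷ X ≫ (M.2.β X).hom = (colimitBraiding hc X).hom ≫ X ◁ d :=
  tensorRight_hom_ext_of_isColimit hc fun j => by
    rw [reassoc_of% leg_colimitBraiding hc, ← comp_whiskerRight_assoc, h, (g j).comm,
      ← MonoidalCategory.whiskerLeft_comp, h]

/-- The lifted cocone is again a colimit. -/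
noncomputable def isColimitCenterCocone : IsColimit (centerCocone hc) where
  desc s :=
    { f := hc.desc ((Center.forget C).mapCocone s)
      comm := comm_of_leg_comp_eq hc s.ι.app (hc.fac ((Center.forget C).mapCocone s)) }
  fac s j := Center.ext _ _ (hc.fac ((Center.forget C).mapCocone s) j)
  uniq s m h := Center.ext _ _ <| hc.uniq ((Center.forget C).mapCocone s) m.f
    fun j => congrArg Center.Hom.f (h j)

end Creation

section Coend

variable {C : Type u} [Category.{v} C] [MonoidalCategory C]

theorem IsTensorCoend.adjunction {B : Type*} [Category* B] {L : B ⥤ C} {R : C ⥤ B} (adj : L ⊣ R)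
    {K : C} {φ : R ⋙ L ⟶ 𝟭 C ⋙ tensorRight K} (hφ : IsTensorCoend φ) :
    IsTensorCoend (Q := L) ((adj.whiskerLeft C).homEquiv L (tensorRight K) φ) := by
  intro W
  have transpose_comp (h : K ⟶ W) := (adj.whiskerLeft C).homEquiv_naturality_right (X := L)
    φ ((tensoringRight C).map h)
  exact (funext transpose_comp) ▸
    ((adj.whiskerLeft C).homEquiv L (tensorRight W)).bijective.comp (hφ W)

theorem tensorLeftHomEquiv_mate_comp {X Y X' Y' W : C} [ExactPairing X X'] [ExactPairing Y Y']
    {f : X ⟶ Y} {g : Y' ⟶ X'} (mate : η_ Y Y' ≫ Y ◁ g = η_ X X' ≫ f ▷ X') (a : X' ⊗ X ⟶ W) :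
    tensorLeftHomEquiv X Y Y' W (g ▷ X ≫ a) = tensorLeftHomEquiv X X X' W a ≫ f ▷ W := by
  simp only [tensorLeftHomEquiv, Equiv.coe_fn_mk]
  calc _ = 𝟙 _ ⊗≫ (η_ Y Y' ≫ Y ◁ g) ▷ X ⊗≫ Y ◁ a := by monoidal
    _ = 𝟙 _ ⊗≫ η_ X X' ▷ X ⊗≫ (f ▷ (X' ⊗ X) ≫ Y ◁ a) := by rw [mate]; monoidal
    _ = _ := by rw [← whisker_exchange]; monoidal

theorem tensorLeftHomEquiv_whiskerLeft_comp {X Y Y' Z W : C} [ExactPairing Y Y'] (f : X ⟶ Z)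
    (b : Y' ⊗ Z ⟶ W) :
    tensorLeftHomEquiv X Y Y' W (Y' ◁ f ≫ b) = f ≫ tensorLeftHomEquiv Z Y Y' W b := by
  simp only [tensorLeftHomEquiv, Equiv.coe_fn_mk]
  calc _ = 𝟙 _ ⊗≫ (η_ Y Y' ▷ X ≫ (Y ⊗ Y') ◁ f) ⊗≫ Y ◁ b := by monoidal
    _ = _ := by rw [← whisker_exchange]; monoidal

theorem tensorLeftHomEquiv_symm_comp_eq_iff {X Y Y' Z W : C} [ExactPairing Y Y']
    (a : X ⟶ Y ⊗ Z) (h : Z ⟶ W) (d : Y' ⊗ X ⟶ W) :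
    (tensorLeftHomEquiv X Y Y' Z).symm a ≫ h = d ↔ a ≫ Y ◁ h = tensorLeftHomEquiv X Y Y' W d := by
  rw [← (tensorLeftHomEquiv X Y Y' W).apply_eq_iff_eq, tensorLeftHomEquiv_naturality,
    Equiv.apply_symm_apply]

theorem dinatural_iff_natural {X Y X' Y' W : C} [ExactPairing X X'] [ExactPairing Y Y']
    {f : X ⟶ Y} {g : Y' ⟶ X'} (mate : η_ Y Y' ≫ Y ◁ g = η_ X X' ≫ f ▷ X')
    (a : X' ⊗ X ⟶ W) (b : Y' ⊗ Y ⟶ W) :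
    g ▷ X ≫ a = Y' ◁ f ≫ b ↔
      f ≫ tensorLeftHomEquiv Y Y Y' W b = tensorLeftHomEquiv X X X' W a ≫ f ▷ W := by
  rw [← tensorLeftHomEquiv_mate_comp mate, ← tensorLeftHomEquiv_whiskerLeft_comp,
    Equiv.apply_eq_iff_eq, eq_comm]

theorem dinatural_symm_iff_natural {X Y X' Y' W : C} [ExactPairing X X'] [ExactPairing Y Y']
    {f : X ⟶ Y} {g : Y' ⟶ X'} (mate : η_ Y Y' ≫ Y ◁ g = η_ X X' ≫ f ▷ X')
    (a : X ⟶ X ⊗ W) (b : Y ⟶ Y ⊗ W) :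
    g ▷ X ≫ (tensorLeftHomEquiv X X X' W).symm a = Y' ◁ f ≫ (tensorLeftHomEquiv Y Y Y' W).symm b ↔
      f ≫ b = a ≫ f ▷ W := by
  rw [dinatural_iff_natural mate, Equiv.apply_symm_apply, Equiv.apply_symm_apply]

variable (C) in
/-- The functor `(M, N) ↦ Mᘁ ⊗ N` of a right rigid category. -/
def dualTensor [RightRigidCategory C] : Cᵒᵖ ⥤ C ⥤ C where
  obj M := tensorLeft (M.unopᘁ)
  map f := (tensoringLeft C).map (f.unopᘁ)
  map_comp f g := by simp [comp_rightAdjointMate]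

theorem coevaluation_evaluation_iff_f {M N : Center C} (η : 𝟙_ (Center C) ⟶ M ⊗ N)
    (ε : N ⊗ M ⟶ 𝟙_ (Center C)) :
    N ◁ η ≫ (α_ N M N).inv ≫ ε ▷ N = (ρ_ N).hom ≫ (λ_ N).inv ↔
      N.1 ◁ η.f ≫ (α_ N.1 M.1 N.1).inv ≫ ε.f ▷ N.1 = (ρ_ N.1).hom ≫ (λ_ N.1).inv := by
  rw [← Center.associator_inv_f, ← Center.leftUnitor_inv_f]
  exact ⟨congrArg Center.Hom.f, fun h => by apply Center.ext; exact h⟩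

theorem evaluation_coevaluation_iff_f {M N : Center C} (η : 𝟙_ (Center C) ⟶ M ⊗ N)
    (ε : N ⊗ M ⟶ 𝟙_ (Center C)) :
    η ▷ M ≫ (α_ M N M).hom ≫ M ◁ ε = (λ_ M).hom ≫ (ρ_ M).inv ↔
      η.f ▷ M.1 ≫ (α_ M.1 N.1 M.1).hom ≫ M.1 ◁ ε.f = (λ_ M.1).hom ≫ (ρ_ M.1).inv := by
  rw [← Center.rightUnitor_inv_f]
  exact ⟨congrArg Center.Hom.f, fun h => by apply Center.ext; exact h⟩

/-- The exact pairing of underlying objects of an exact pairing in the center. -/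
noncomputable instance exactPairingFst (M N : Center C) [ExactPairing M N] :
    ExactPairing M.1 N.1 where
  coevaluation' := (η_ M N).f
  evaluation' := (ε_ M N).f
  coevaluation_evaluation' :=
    (coevaluation_evaluation_iff_f _ _).1 (ExactPairing.coevaluation_evaluation M N)
  evaluation_coevaluation' :=
    (evaluation_coevaluation_iff_f _ _).1 (ExactPairing.evaluation_coevaluation M N)

instance preservesColimitsOfShape_tensorLeft [LeftRigidCategory C] {J : Type*} [Category* J]
    (X : C) : PreservesColimitsOfShape J (tensorLeft X) :=
  (tensorLeftAdjunction (ᘁX) X).leftAdjoint_preservesColimits.preservesColimitsOfShape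

instance preservesColimitsOfShape_tensorRight [RightRigidCategory C] {J : Type*} [Category* J]
    (X : C) : PreservesColimitsOfShape J (tensorRight X) :=
  (tensorRightAdjunction X (Xᘁ)).leftAdjoint_preservesColimits.preservesColimitsOfShape

theorem exists_isColimit_cowedge_center [RigidCategory C] {B : Type*} [Category* B]
    (F : Bᵒᵖ ⥤ B ⥤ Center C)
    {c : Multicofork ((multispanIndexCoend F).map (Center.forget C))} (hc : IsColimit c) :
    ∃ c' : Cowedge F, Nonempty (IsColimit c') ∧ c'.pt.1 = c.pt :=
  let hc' := (IsColimit.precomposeInvEquiv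
    ((multispanIndexCoend F).multispanMapIso (Center.forget C)) c).symm hc
  ⟨centerCocone hc', ⟨isColimitCenterCocone hc'⟩, rfl⟩

section ForgetCowedge

variable [RightRigidCategory (Center C)] {K : C}

theorem coevaluation_comp_rightAdjointMate_f {M N : Center C} (f : M ⟶ N) :
    η_ N.1 (Nᘁ).1 ≫ N.1 ◁ (fᘁ).f = η_ M.1 (Mᘁ).1 ≫ f.f ▷ (Mᘁ).1 :=
  congrArg Center.Hom.f (coevaluation_comp_rightAdjointMate f)

/-- The cowedge under the objects `(Mᘁ ⊗ M).1` that corresponds to a natural family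
`M.1 ⟶ M.1 ⊗ K`. -/
noncomputable def forgetCowedge (φ : Center.forget C ⟶ Center.forget C ⋙ tensorRight K) :
    Multicofork ((multispanIndexCoend (dualTensor (Center C))).map (Center.forget C)) :=
  Multicofork.ofπ _ K (fun (M : Center C) => (tensorLeftHomEquiv M.1 M.1 (Mᘁ).1 K).symm (φ.app M))
    fun f => (dinatural_symm_iff_natural (coevaluation_comp_rightAdjointMate_f f.hom) _ _).2
      (φ.naturality f.hom)

theorem forgetCowedge_π_comp_eq_iff (φ : Center.forget C ⟶ Center.forget C ⋙ tensorRight K)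
    {W : C} (h : K ⟶ W) (M : Center C) (d : (Mᘁ).1 ⊗ M.1 ⟶ W) :
    (forgetCowedge φ).π M ≫ h = d ↔
      φ.app M ≫ M.1 ◁ h = tensorLeftHomEquiv M.1 M.1 (Mᘁ).1 W d :=
  tensorLeftHomEquiv_symm_comp_eq_iff (Y := M.1) (φ.app M) h d

/-- A cowedge under the objects `(Mᘁ ⊗ M).1` as a natural family `M.1 ⟶ M.1 ⊗ W`. -/
noncomputable def natTransOfCowedge
    (c : Multicofork ((multispanIndexCoend (dualTensor (Center C))).map (Center.forget C))) :
    Center.forget C ⟶ Center.forget C ⋙ tensorRight c.pt where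
  app M := tensorLeftHomEquiv M.1 M.1 (Mᘁ).1 c.pt (c.π M)
  naturality _ _ f := (dinatural_iff_natural (coevaluation_comp_rightAdjointMate_f f) _ _).1
    (c.condition (Arrow.mk f))

theorem nonempty_isColimit_forgetCowedge {φ : Center.forget C ⟶ Center.forget C ⋙ tensorRight K}
    (hφ : IsTensorCoend φ) : Nonempty (IsColimit (forgetCowedge φ)) := by
  choose desc hdesc using fun
    c : Multicofork ((multispanIndexCoend (dualTensor (Center C))).map (Center.forget C)) =>
      (hφ c.pt).surjective (natTransOfCowedge c)
  have π_desc c (M : Center C) := (forgetCowedge_π_comp_eq_iff φ (desc c) M _).2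
    (NatTrans.congr_app (hdesc c) M)
  refine ⟨Multicofork.IsColimit.mk _ desc π_desc fun c m hm => ?_⟩
  refine (hφ c.pt).injective (NatTrans.ext (funext fun M => ?_))
  exact ((forgetCowedge_π_comp_eq_iff φ m M _).1 (hm M)).trans
    ((forgetCowedge_π_comp_eq_iff φ (desc c) M _).1 (π_desc c M)).symm

end ForgetCowedge

end Coend

section DoubleSum

variable {C : Type u} [Category.{v} C] [Preadditive C] [HasFiniteBiproducts C]
  [MonoidalCategory C] [MonoidalPreadditive C]

/-- Distributivity of the tensor product over a double direct sum. -/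
noncomputable def biproductTensorBiproductIso {ι : Type*} [Finite ι] (d : ι → C) (F : ι → ι → C) :
    (⨁ fun i => d i ⊗ ⨁ F i) ≅ ⨁ fun ij : ι × ι => d ij.1 ⊗ F ij.1 ij.2 :=
  haveI (i : ι) : PreservesBiproductsOfShape ι (tensorLeft (d i)) :=
    preservesBiproductsOfShape_of_preservesCoproductsOfShape _
  biproduct.mapIso (fun i => (tensorLeft (d i)).mapBiproduct (F i)) ≪≫
    biproductBiproductIso (fun _ => ι) (fun i j => d i ⊗ F i j) ≪≫
    biproduct.whiskerEquiv (g := fun ij : ι × ι => d ij.1 ⊗ F ij.1 ij.2)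
      (Equiv.sigmaEquivProd ι ι) fun _ => Iso.refl _

end DoubleSum

theorem existsUnique_desc_cowedge {B : Type*} [Category* B] {D : Type*} [Category* D]
    {F : Bᵒᵖ ⥤ B ⥤ D} {c : Cowedge F} (hc : IsColimit c) {E : D}
    (d : ∀ b, (F.obj (.op b)).obj b ⟶ E)
    (hd : ∀ ⦃a b : B⦄ (f : a ⟶ b),
      (F.map f.op).app a ≫ d a = (F.obj (.op b)).map f ≫ d b) :
    ∃! φ : c.pt ⟶ E, ∀ b, c.π b ≫ φ = d b :=
  ⟨Cowedge.IsColimit.desc hc d hd, fun b => Cowedge.IsColimit.π_desc hc d hd b, fun _ hφ =>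
    Cowedge.IsColimit.hom_ext hc fun b => (hφ b).trans (Cowedge.IsColimit.π_desc hc d hd b).symm⟩

section DualBraiding

variable {C : Type u} [Category.{v} C] [MonoidalCategory C]

/-- The mate of the inverse of `s` along an exact pairing of `A` and `A'`. It is the formula for a
component of the half braiding dual to a half braiding with component `s`. -/
def dualBraiding (A A' : C) [ExactPairing A A'] {X : C} (s : A ⊗ X ≅ X ⊗ A) : A' ⊗ X ⟶ X ⊗ A' :=
  (ρ_ (A' ⊗ X)).inv ≫ (A' ⊗ X) ◁ η_ A A' ≫ (α_ A' X (A ⊗ A')).hom ≫ A' ◁ (α_ X A A').inv ≫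
    A' ◁ s.inv ▷ A' ≫ A' ◁ (α_ A X A').hom ≫ (α_ A' A (X ⊗ A')).inv ≫ ε_ A A' ▷ (X ⊗ A') ≫
    (λ_ (X ⊗ A')).hom

theorem coevaluation_dualBraiding {A A' : C} [ExactPairing A A'] {X : C} (s : A ⊗ X ≅ X ⊗ A) :
    η_ A A' ▷ X ≫ (α_ A A' X).hom ≫ A ◁ dualBraiding A A' s ≫ (α_ A X A').inv ≫ s.hom ▷ A' ≫
      (α_ X A A').hom = (λ_ X).hom ≫ (ρ_ X).inv ≫ X ◁ η_ A A' := by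
  rw [dualBraiding]
  calc _ = 𝟙 _ ⊗≫ (η_ A A' ▷ (X ⊗ 𝟙_ C) ≫ (A ⊗ A') ◁ (X ◁ η_ A A' ≫ (α_ _ _ _).inv ≫
          s.inv ▷ A')) ⊗≫ A ◁ ε_ A A' ▷ (X ⊗ A') ⊗≫ s.hom ▷ A' ⊗≫ 𝟙 _ := by monoidal
    _ = 𝟙 _ ⊗≫ X ◁ η_ A A' ⊗≫ s.inv ▷ A' ⊗≫ (η_ A A' ▷ A ≫ (α_ _ _ _).hom ≫ A ◁ ε_ A A') ▷
          (X ⊗ A') ⊗≫ s.hom ▷ A' ⊗≫ 𝟙 _ := by rw [← whisker_exchange]; monoidal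
    _ = 𝟙 _ ⊗≫ X ◁ η_ A A' ⊗≫ (s.inv ≫ s.hom) ▷ A' ⊗≫ 𝟙 _ := by
      rw [ExactPairing.evaluation_coevaluation]; monoidal
    _ = _ := by rw [s.inv_hom_id]; monoidal

theorem dualBraiding_evaluation {A A' : C} [ExactPairing A A'] {X : C} (s : A ⊗ X ≅ X ⊗ A) :
    (α_ A' A X).hom ≫ A' ◁ s.hom ≫ (α_ A' X A).inv ≫ dualBraiding A A' s ▷ A ≫ (α_ X A' A).hom ≫
      X ◁ ε_ A A' = ε_ A A' ▷ X ≫ (λ_ X).hom ≫ (ρ_ X).inv := by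
  rw [dualBraiding]
  calc _ = 𝟙 _ ⊗≫ A' ◁ s.hom ⊗≫ A' ◁ X ◁ η_ A A' ▷ A ⊗≫ A' ◁ s.inv ▷ (A' ⊗ A) ⊗≫
          (ε_ A A' ▷ (X ⊗ (A' ⊗ A)) ≫ 𝟙_ C ◁ X ◁ ε_ A A') ⊗≫ 𝟙 _ := by monoidal
    _ = 𝟙 _ ⊗≫ A' ◁ s.hom ⊗≫ A' ◁ X ◁ η_ A A' ▷ A ⊗≫
          A' ◁ (s.inv ▷ (A' ⊗ A) ≫ (A ⊗ X) ◁ ε_ A A') ⊗≫ ε_ A A' ▷ X ⊗≫ 𝟙 _ := by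
      rw [← whisker_exchange]; monoidal
    _ = 𝟙 _ ⊗≫ A' ◁ s.hom ⊗≫ A' ◁ X ◁ (η_ A A' ▷ A ≫ (α_ _ _ _).hom ≫ A ◁ ε_ A A') ⊗≫
          A' ◁ (s.inv ▷ 𝟙_ C) ⊗≫ ε_ A A' ▷ X ⊗≫ 𝟙 _ := by rw [← whisker_exchange]; monoidal
    _ = 𝟙 _ ⊗≫ A' ◁ (s.hom ≫ s.inv) ⊗≫ ε_ A A' ▷ X ⊗≫ 𝟙 _ := by
      rw [ExactPairing.evaluation_coevaluation]; monoidal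
    _ = _ := by rw [s.hom_inv_id]; monoidal

theorem coevaluation_comm {A A' : C} [ExactPairing A A'] {a : HalfBraiding A} {a' : HalfBraiding A'}
    (h : ∀ X, (a'.β X).hom = dualBraiding A A' (a.β X)) (X : C) :
    η_ A A' ▷ X ≫ (α_ A A' X).hom ≫ A ◁ (a'.β X).hom ≫ (α_ A X A').inv ≫ (a.β X).hom ▷ A' ≫
      (α_ X A A').hom = ((λ_ X).hom ≫ (ρ_ X).inv) ≫ X ◁ η_ A A' := by
  rw [h, coevaluation_dualBraiding, Category.assoc]

theorem evaluation_comm {A A' : C} [ExactPairing A A'] {a : HalfBraiding A} {a' : HalfBraiding A'}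
    (h : ∀ X, (a'.β X).hom = dualBraiding A A' (a.β X)) (X : C) :
    ε_ A A' ▷ X ≫ (λ_ X).hom ≫ (ρ_ X).inv = ((α_ A' A X).hom ≫ A' ◁ (a.β X).hom ≫
      (α_ A' X A).inv ≫ (a'.β X).hom ▷ A ≫ (α_ X A' A).hom) ≫ X ◁ ε_ A A' := by
  simp only [h, Category.assoc, dualBraiding_evaluation]

/-- An exact pairing of underlying objects lifts to the center if the half braidings are dual. -/
noncomputable abbrev exactPairingOfDualBraiding {M N : Center C} [ExactPairing M.1 N.1]
    (h : ∀ X, (N.2.β X).hom = dualBraiding M.1 N.1 (M.2.β X)) : ExactPairing M N where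
  coevaluation' := ⟨η_ M.1 N.1, coevaluation_comm h⟩
  evaluation' := ⟨ε_ M.1 N.1, evaluation_comm h⟩
  coevaluation_evaluation' :=
    (coevaluation_evaluation_iff_f _ _).2 (ExactPairing.coevaluation_evaluation M.1 N.1)
  evaluation_coevaluation' :=
    (evaluation_coevaluation_iff_f _ _).2 (ExactPairing.evaluation_coevaluation M.1 N.1)

/-- The dual of the underlying object of an object of the center. -/
noncomputable abbrev hasRightDualFst (M : Center C) [HasRightDual M] : HasRightDual M.1 where
  rightDual := (Mᘁ).1

theorem rightAdjointMate_f {M N : Center C} [HasRightDual M] [HasRightDual N] (f : M ⟶ N) :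
    letI := hasRightDualFst M
    letI := hasRightDualFst N
    (fᘁ).f = (f.f)ᘁ := by
  calc (fᘁ).f = (ρ_ (Nᘁ).1).inv ≫ (Nᘁ).1 ◁ η_ M.1 (Mᘁ).1 ≫ (Nᘁ).1 ◁ (f.f ▷ (Mᘁ).1) ≫
        (α_ (Nᘁ).1 N.1 (Mᘁ).1).inv ≫ ε_ N.1 (Nᘁ).1 ▷ (Mᘁ).1 ≫ (λ_ (Mᘁ).1).hom := by
        rw [← Center.rightUnitor_inv_f, ← Center.associator_inv_f]
        rfl
    _ = _ := rfl

end DualBraiding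

section Pivotal

open PivotalCat

variable {C : Type u} [Category.{v} C] [MonoidalCategory C] [PivotalCat C]

/-- The left duality of a pivotal category. -/
instance exactPairingDual (X : C) : ExactPairing X (dual X) where
  coevaluation' := coevl X
  evaluation' := evl X
  coevaluation_evaluation' := by
    rw [← cancel_epi (ρ_ _).inv, ← cancel_mono (λ_ _).hom]
    simpa using left_zigzag₂ X
  evaluation_coevaluation' := by
    rw [← cancel_epi (λ_ _).inv, ← cancel_mono (ρ_ _).hom]
    simpa using left_zigzag₁ X

/-- The right duality of a pivotal category. -/
instance dualExactPairing (X : C) : ExactPairing (dual X) X where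
  coevaluation' := coevr X
  evaluation' := evr X
  coevaluation_evaluation' := by
    rw [← cancel_epi (ρ_ _).inv, ← cancel_mono (λ_ _).hom]
    simpa using right_zigzag₁ X
  evaluation_coevaluation' := by
    rw [← cancel_epi (λ_ _).inv, ← cancel_mono (ρ_ _).hom]
    simpa using right_zigzag₂ X

/-- A pivotal category is rigid, the left and the right dual of `X` both being `dual X`. -/
instance pivotalRigidCategory : RigidCategory C where
  rightDual X := { rightDual := dual X }
  leftDual X := { leftDual := dual X }

/-- The exact pairing of `A` with an object equal to `dual A`. -/
abbrev exactPairingOfEq {A A' : C} (h : A' = dual A) : ExactPairing A A' :=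
  h ▸ exactPairingDual A

theorem dualBraiding_exactPairingOfEq {A A' X : C} (h : A' = dual A) (s : A ⊗ X ≅ X ⊗ A) :
    letI := exactPairingOfEq h
    dualBraiding A A' s = eqToHom h ▷ X ≫ dualBeta A X s ≫ X ◁ eqToHom h.symm := by
  subst h
  simp only [eqToHom_refl, id_whiskerRight, MonoidalCategory.whiskerLeft_id, Category.id_comp,
    Category.comp_id]
  rfl

/-- An object equal to `dual A`, as the chosen right dual of `A`. -/
abbrev hasRightDualOfEq {A A' : C} (h : A' = dual A) : HasRightDual A where
  rightDual := A'
  exact := exactPairingOfEq h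

theorem rightAdjointMate_hasRightDualOfEq {A B A' B' : C} (hA : A' = dual A) (hB : B' = dual B)
    (f : A ⟶ B) :
    letI := hasRightDualOfEq hA
    letI := hasRightDualOfEq hB
    fᘁ = eqToHom hB ≫ pdual f ≫ eqToHom hA.symm := by
  subst hA hB
  simp only [eqToHom_refl, Category.id_comp, Category.comp_id]
  rfl

variable {Dual : Center C → Center C} (hD : ∀ M : Center C, (Dual M).1 = dual M.1)
  (hDβ : ∀ (M : Center C) (X : C), ((Dual M).2.β X).hom =
    eqToHom (hD M) ▷ X ≫ dualBeta M.1 X (M.2.β X) ≫ X ◁ eqToHom (hD M).symm)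

/-- The duals `(M.1*, σ^∨)` make the center of a pivotal category right rigid. -/
noncomputable abbrev centerRightRigidCategory : RightRigidCategory (Center C) where
  rightDual M :=
    letI := exactPairingOfEq (hD M)
    { rightDual := Dual M
      exact := exactPairingOfDualBraiding fun X =>
        (hDβ M X).trans (dualBraiding_exactPairingOfEq (hD M) (M.2.β X)).symm }

theorem rightAdjointMate_f_eq_pdual {M N : Center C} (f : M ⟶ N) :
    letI := centerRightRigidCategory hD hDβ
    (fᘁ).f = eqToHom (hD N) ≫ pdual f.f ≫ eqToHom (hD M).symm :=
  letI := centerRightRigidCategory hD hDβ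
  (rightAdjointMate_f f).trans (rightAdjointMate_hasRightDualOfEq (hD M) (hD N) f.f)

end Pivotal

theorem isSemisimpleBasis_of_isRepresentativeSet {k : Type w} [CommRing k] {C : Type u}
    [Category.{v} C] [Preadditive C] [CategoryTheory.Linear k C] [MonoidalCategory C]
    [MonoidalPreadditive C] [CategoryTheory.MonoidalLinear k C] [HasFiniteBiproducts C]
    [PivotalCat C] [MonoidalKCat k C] [PreFusionCat k C] {I : Set C}
    (hI : IsRepresentativeSet k C I) : IsSemisimpleBasis k (Subtype.val : I → C) where
  exists_decomposition X := by
    obtain ⟨n, obj, p, q, simple, total, -⟩ := PreFusionCat.semisimple (k := k) X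
    choose i hi using fun a => (hI.2.2 (obj a) (simple a)).exists
    have e (a) : obj a ≅ i a := (hi a).2.some
    refine ⟨n, fun a => ⟨i a, (hi a).1⟩, fun a => p a ≫ (e a).hom, fun a => (e a).inv ≫ q a, ?_⟩
    simpa using total
  hom_eq_zero {i j} hij f := by
    refine PreFusionCat.simple_hom_zero (hI.2.1 i i.2) (hI.2.1 j j.2) ⟨fun e => hij ?_⟩ f
    exact Subtype.ext <| (hI.2.2 i (hI.2.1 i i.2)).unique ⟨i.2, ⟨Iso.refl _⟩⟩ ⟨j.2, ⟨e⟩⟩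
  exists_smul_id {i} f := ((hI.2.1 i i.2).surjective f).imp fun _ h => h.symm

end CenterCoend

open CenterCoend in
theorem center_admits_coend_general {k : Type*} [Semiring k] {C : Type u} [Category.{v} C]
    [Preadditive C] [CategoryTheory.Linear k C] [MonoidalCategory C] [MonoidalPreadditive C]
    [MonoidalLinear k C] [HasFiniteBiproducts C] [RigidCategory C] [RightRigidCategory (Center C)]
    {ι : Type*} [Finite ι] {s : ι → C} (hs : IsSemisimpleBasis k s) :
    ∃ c : Cowedge (dualTensor (Center C)), Nonempty (IsColimit c) ∧
      Nonempty (c.pt.1 ≅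
        ⨁ fun ij : ι × ι => (s ij.1)ᘁ ⊗ ((ᘁ(s ij.2) : C) ⊗ (s ij.1 ⊗ s ij.2))) := by
  choose θ hθ using fun X : C => exists_isTensorEnd hs (tensorLeft X)
  obtain ⟨φ, hφ⟩ := exists_isTensorCoend hs (cofreeFunctor hθ ⋙ Center.forget C)
  obtain ⟨colimit⟩ := nonempty_isColimit_forgetCowedge (hφ.adjunction (cofreeAdjunction hθ))
  obtain ⟨c, hc, pt_eq⟩ := exists_isColimit_cowedge_center _ colimit
  exact ⟨c, hc, ⟨eqToIso pt_eq ≪≫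
    biproductTensorBiproductIso (fun i => (s i)ᘁ) fun i j => (ᘁ(s j) : C) ⊗ (s i ⊗ s j)⟩⟩

open PivotalCat in
/-- Section 12.6: let `C` be a fusion category over `k` with representative set `I` of
simple objects.  Then the pivotal braided category `Z(C)` admits a coend: given the dual
`M ↦ M* = (M₀*, σ^∨)` on `Z(C)` (hypothesised here via its underlying object and the
components of its half braiding), the functor `(M, N) ↦ M* ⊗ N` on `Z(C)` has a coend
`(C̃, ρ)`, and the underlying object of `C̃` (its image under the forgetful functor
`Z(C) → C`) is isomorphic to `⊕_{i,j ∈ I} i* ⊗ j* ⊗ i ⊗ j`. -/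
theorem center_admits_coend (k : Type w) [CommRing k] (C : Type u)
    [Category.{v} C] [Preadditive C] [CategoryTheory.Linear k C] [MonoidalCategory C]
    [MonoidalPreadditive C] [CategoryTheory.MonoidalLinear k C]
    [CategoryTheory.Limits.HasFiniteBiproducts C] [PivotalCat C] [MonoidalKCat k C]
    [PreFusionCat k C] [FusionCat k C]
    (I : Finset C) (hI : IsRepresentativeSet k C ↑I)
    -- the duality `M ↦ M*` of the pivotal category `Z(C)`:
    (Dual : Center C → Center C)
    (hD : ∀ M : Center C, (Dual M).1 = dual M.1)
    (hDβ : ∀ (M : Center C) (X : C),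
      ((Dual M).2.β X).hom =
        (eqToHom (hD M) ▷ X) ≫ dualBeta M.1 X (M.2.β X) ≫ (X ◁ eqToHom (hD M).symm)) :
    ∃ (Cpt : Center C) (ρ : ∀ M : Center C, Dual M ⊗ M ⟶ Cpt),
      -- `ρ` is dinatural (for `f* : (Dual N) ⟶ (Dual M)` the dual morphism in `Z(C)`):
      (∀ {M N : Center C} (f : M ⟶ N) (g : Dual N ⟶ Dual M),
        g.f = eqToHom (hD N) ≫ pdual f.f ≫ eqToHom (hD M).symm →
        (g ▷ M) ≫ ρ M = (Dual N ◁ f) ≫ ρ N) ∧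
      -- `(Cpt, ρ)` is universal among dinatural transformations:
      (∀ (E : Center C) (d : ∀ M : Center C, Dual M ⊗ M ⟶ E),
        (∀ {M N : Center C} (f : M ⟶ N) (g : Dual N ⟶ Dual M),
          g.f = eqToHom (hD N) ≫ pdual f.f ≫ eqToHom (hD M).symm →
          (g ▷ M) ≫ d M = (Dual N ◁ f) ≫ d N) →
        ∃! φ : Cpt ⟶ E, ∀ M : Center C, ρ M ≫ φ = d M) ∧
      -- the underlying object of the coend is `⊕_{i,j ∈ I} i* ⊗ j* ⊗ i ⊗ j`:
      Nonempty (Cpt.1 ≅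
        ⨁ fun ij : ↥I × ↥I => dual ij.1.1 ⊗ (dual ij.2.1 ⊗ (ij.1.1 ⊗ ij.2.1))) := by
  let _ := CenterCoend.centerRightRigidCategory hD hDβ
  obtain ⟨c, ⟨hc⟩, pt_iso⟩ := center_admits_coend_general (ι := I)
    (CenterCoend.isSemisimpleBasis_of_isRepresentativeSet hI)
  have dual_eq {M N : Center C} (f : M ⟶ N) := CenterCoend.rightAdjointMate_f_eq_pdual hD hDβ f
  refine ⟨c.pt, fun M => c.π M, fun {M N} f g hg => ?_, fun E d hd => ?_, pt_iso⟩
  · obtain rfl : g = fᘁ := Center.ext _ _ (hg.trans (dual_eq f).symm)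
    exact Cowedge.condition c f
  · exact CenterCoend.existsUnique_desc_cowedge hc d fun _ _ f => hd f (fᘁ) (dual_eq f)
end

section
/- Let C be a fusion category over a commutative ring k with representative set I of simple objects, let D be a category whose hom-sets are k-modules with k-bilinear composition and which admits finite direct sums, and let F : C^op × C → D be a functor that is k-linear in each variable. Then F has a coend, namely C₀ = ⊕_{i∈I} F(i,i) together with the dinatural transformation ρ_X = Σ_{α∈Λ} ι_{i_α} ∘ F(q_X^α, p_X^α) : F(X,X) → C₀, for any I-partition (p_X^α : X → i_α, q_X^α : i_α → X)_{α∈Λ} of X, where ι_i is the inclusion of the summand F(i,i); moreover, any dinatural transformation d from F to an object D₀ factors through ρ via the unique morphism C₀ → D₀ whose restriction to the summand F(i,i) is d_i. -/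
open CategoryTheory CategoryTheory.Limits MonoidalCategory

universe v u w

/-!
Write `𝟙 X = ∑ₐ pₐ ≫ qₐ` with each summand factoring through a member of a family `S` of objects.
Inserting these sums shows that, for a biadditive `F : Cᵒᵖ × C ⥤ D`, restricting a dinatural
transformation to the objects `S i` is a bijection onto the families dinatural along the morphisms
between the `S i`; the inverse sends `e` to `∑ₐ F(qₐ, pₐ) ≫ e`. If `F` is bilinear and the only
morphisms between the `S i` are scalar endomorphisms and zero maps, as for representatives of the
simple objects of a fusion category, every family is dinatural along them, and a universal one is
given by the inclusions into `⨁ᵢ F(S i, S i)`.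
-/

section CoendOfGenerators

open Opposite
open scoped CategoryTheory.Prod

variable {C : Type*} [Category C] {D : Type*} [Category D] {ι : Type*}

/-- Dinaturality, along the morphisms between members of a family `S` of objects, of morphisms
`e i : F(S i, S i) ⟶ E`. Dinatural transformations from `F` to `E` are the case
`S = fun X : C => X`. -/
def IsDinaturalOn (S : ι → C) (F : Cᵒᵖ × C ⥤ D) {E : D}
    (e : ∀ i, F.obj (op (S i), S i) ⟶ E) : Prop :=
  ∀ ⦃i j : ι⦄ (g : S i ⟶ S j),
    F.map (g.op ×ₘ 𝟙 (S i)) ≫ e i = F.map (𝟙 (op (S j)) ×ₘ g) ≫ e j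

section Preadditive

variable [Preadditive C]

/-- An expression of `𝟙 X` as a finite sum of morphisms factoring through members of a family `S`
of objects. An `I`-partition of `X` is such an expression, for `S` the inclusion of `I`, in which
moreover `q a ≫ p b` is `𝟙` for `a = b` and `0` otherwise. -/
structure IdentityDecomposition (S : ι → C) (Λ : Type*) [Fintype Λ] (X : C) where
  idx : Λ → ι
  p : ∀ a, X ⟶ S (idx a)
  q : ∀ a, S (idx a) ⟶ X
  sum_eq_id : ∑ a, p a ≫ q a = 𝟙 X

variable [Preadditive D] (F : Cᵒᵖ × C ⥤ D) {S : ι → C} {E : D}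

theorem map_zero_op_prod_id (X X' Y : C) [(Prod.sectL Cᵒᵖ Y ⋙ F).Additive] :
    F.map ((0 : X ⟶ X').op ×ₘ 𝟙 Y) = 0 :=
  (Prod.sectL Cᵒᵖ Y ⋙ F).map_zero (op X') (op X)

theorem map_id_prod_zero (X Y Y' : C) [(Prod.sectR (op X) C ⋙ F).Additive] :
    F.map (𝟙 (op X) ×ₘ (0 : Y ⟶ Y')) = 0 :=
  (Prod.sectR (op X) C ⋙ F).map_zero Y Y'

theorem map_sum_op_prod_id {X X' : C} (Y : C) [(Prod.sectL Cᵒᵖ Y ⋙ F).Additive]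
    {Λ : Type*} [Fintype Λ] (g : Λ → (X ⟶ X')) :
    F.map ((∑ a, g a).op ×ₘ 𝟙 Y) = ∑ a, F.map ((g a).op ×ₘ 𝟙 Y) := by
  rw [op_sum]
  exact (Prod.sectL Cᵒᵖ Y ⋙ F).map_sum (fun a => (g a).op) Finset.univ

theorem map_id_prod_sum (X : C) {Y Y' : C} [(Prod.sectR (op X) C ⋙ F).Additive]
    {Λ : Type*} [Fintype Λ] (g : Λ → (Y ⟶ Y')) :
    F.map (𝟙 (op X) ×ₘ (∑ a, g a)) = ∑ a, F.map (𝟙 (op X) ×ₘ g a) :=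
  (Prod.sectR (op X) C ⋙ F).map_sum g Finset.univ

namespace IdentityDecomposition

variable {Λ Λ' : Type*} [Fintype Λ] [Fintype Λ'] {X Y : C}

/-- The morphism `∑ₐ F(qₐ, pₐ) ≫ e : F(X, X) ⟶ E` extending a family `e` given on the objects
`S i` to an object `X` whose identity decomposes through them. -/
def extend (P : IdentityDecomposition S Λ X) (e : ∀ i, F.obj (op (S i), S i) ⟶ E) :
    F.obj (op X, X) ⟶ E :=
  ∑ a, F.map ((P.q a).op ×ₘ P.p a) ≫ e (P.idx a)

theorem map_comp_extend_eq_of_forall (P : IdentityDecomposition S Λ X)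
    {e : ∀ i, F.obj (op (S i), S i) ⟶ E} (f : X ⟶ Y) [(Prod.sectR (op Y) C ⋙ F).Additive]
    {δ : F.obj (op Y, Y) ⟶ E}
    (hδ : ∀ a, F.map ((P.q a ≫ f).op ×ₘ 𝟙 _) ≫ e (P.idx a) =
      F.map (𝟙 (op Y) ×ₘ (P.q a ≫ f)) ≫ δ) :
    F.map (f.op ×ₘ 𝟙 X) ≫ P.extend F e = F.map (𝟙 (op Y) ×ₘ f) ≫ δ := by
  have summand (a : Λ) : F.map (f.op ×ₘ 𝟙 X) ≫ F.map ((P.q a).op ×ₘ P.p a) ≫ e (P.idx a) =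
      F.map (𝟙 (op Y) ×ₘ (P.p a ≫ P.q a ≫ f)) ≫ δ := by
    calc F.map (f.op ×ₘ 𝟙 X) ≫ F.map ((P.q a).op ×ₘ P.p a) ≫ e (P.idx a)
      _ = F.map (𝟙 (op Y) ×ₘ P.p a) ≫ F.map ((P.q a ≫ f).op ×ₘ 𝟙 _) ≫ e (P.idx a) := by
        simp only [← F.map_comp_assoc, prod_comp, op_comp, Category.id_comp, Category.comp_id]
      _ = F.map (𝟙 (op Y) ×ₘ P.p a) ≫ F.map (𝟙 (op Y) ×ₘ (P.q a ≫ f)) ≫ δ := by rw [hδ]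
      _ = F.map (𝟙 (op Y) ×ₘ (P.p a ≫ P.q a ≫ f)) ≫ δ := by
        simp only [← F.map_comp_assoc, prod_comp, Category.comp_id]
  have sum_eq : ∑ a, P.p a ≫ P.q a ≫ f = f := by
    simp only [← Category.assoc, ← Preadditive.sum_comp, P.sum_eq_id, Category.id_comp]
  simp only [extend, Preadditive.comp_sum, summand]
  rw [← Preadditive.sum_comp, ← map_id_prod_sum, sum_eq]

theorem map_comp_eq_map_comp_extend (P : IdentityDecomposition S Λ Y)
    {e : ∀ i, F.obj (op (S i), S i) ⟶ E} (he : IsDinaturalOn S F e) {i : ι} (g : S i ⟶ Y)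
    [(Prod.sectL Cᵒᵖ (S i) ⋙ F).Additive] :
    F.map (g.op ×ₘ 𝟙 (S i)) ≫ e i = F.map (𝟙 (op Y) ×ₘ g) ≫ P.extend F e := by
  have summand (a : Λ) : F.map (𝟙 (op Y) ×ₘ g) ≫ F.map ((P.q a).op ×ₘ P.p a) ≫ e (P.idx a) =
      F.map ((g ≫ P.p a ≫ P.q a).op ×ₘ 𝟙 (S i)) ≫ e i := by
    calc F.map (𝟙 (op Y) ×ₘ g) ≫ F.map ((P.q a).op ×ₘ P.p a) ≫ e (P.idx a)
      _ = F.map ((P.q a).op ×ₘ 𝟙 (S i)) ≫ F.map (𝟙 _ ×ₘ (g ≫ P.p a)) ≫ e (P.idx a) := by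
        simp only [← F.map_comp_assoc, prod_comp, Category.id_comp, Category.comp_id]
      _ = F.map ((P.q a).op ×ₘ 𝟙 (S i)) ≫ F.map ((g ≫ P.p a).op ×ₘ 𝟙 (S i)) ≫ e i := by
        rw [he]
      _ = F.map ((g ≫ P.p a ≫ P.q a).op ×ₘ 𝟙 (S i)) ≫ e i := by
        simp only [← F.map_comp_assoc, prod_comp, op_comp, Category.assoc, Category.comp_id]
  have sum_eq : ∑ a, g ≫ P.p a ≫ P.q a = g := by
    rw [← Preadditive.comp_sum, P.sum_eq_id, Category.comp_id]
  simp only [extend, Preadditive.comp_sum, summand]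
  rw [← Preadditive.sum_comp, ← map_sum_op_prod_id, sum_eq]

theorem map_comp_extend [∀ Y, (Prod.sectL Cᵒᵖ Y ⋙ F).Additive]
    [(Prod.sectR (op Y) C ⋙ F).Additive] (P : IdentityDecomposition S Λ X)
    (Q : IdentityDecomposition S Λ' Y) {e : ∀ i, F.obj (op (S i), S i) ⟶ E}
    (he : IsDinaturalOn S F e) (f : X ⟶ Y) :
    F.map (f.op ×ₘ 𝟙 X) ≫ P.extend F e = F.map (𝟙 (op Y) ×ₘ f) ≫ Q.extend F e :=
  P.map_comp_extend_eq_of_forall F f fun a => Q.map_comp_eq_map_comp_extend F he (P.q a ≫ f)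

theorem extend_eq_self {i : ι} [(Prod.sectL Cᵒᵖ (S i) ⋙ F).Additive]
    (P : IdentityDecomposition S Λ (S i)) {e : ∀ i, F.obj (op (S i), S i) ⟶ E}
    (he : IsDinaturalOn S F e) : P.extend F e = e i := by
  simpa using (P.map_comp_eq_map_comp_extend F he (𝟙 (S i))).symm

theorem extend_restrict [(Prod.sectR (op X) C ⋙ F).Additive] (P : IdentityDecomposition S Λ X)
    {d : ∀ X, F.obj (op X, X) ⟶ E} (hd : IsDinaturalOn (fun X : C => X) F d) :
    P.extend F (fun i => d (S i)) = d X := by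
  simpa using P.map_comp_extend_eq_of_forall F (𝟙 X) fun a => hd (P.q a ≫ 𝟙 X)

theorem extend_comp (P : IdentityDecomposition S Λ X) (e : ∀ i, F.obj (op (S i), S i) ⟶ E)
    {E' : D} (φ : E ⟶ E') : P.extend F e ≫ φ = P.extend F (fun i => e i ≫ φ) := by
  simp only [extend, Preadditive.sum_comp, Category.assoc]

end IdentityDecomposition

end Preadditive

section Linear

variable (k : Type*) [Semiring k] [Preadditive C] [Linear k C] [Preadditive D] [Linear k D]

/-- The conclusion of Schur's lemma for a family of objects: every endomorphism of a member is a
scalar, and there are no nonzero morphisms between members with different indices. -/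
structure IsSchurFamily (S : ι → C) : Prop where
  exists_smul_id : ∀ {i} (g : S i ⟶ S i), ∃ c : k, c • 𝟙 (S i) = g
  hom_eq_zero : ∀ {i j}, i ≠ j → ∀ g : S i ⟶ S j, g = 0

/-- `k`-linearity of `F : Cᵒᵖ × C ⥤ D` in each of its two variables. -/
structure IsBilinear (F : Cᵒᵖ × C ⥤ D) : Prop where
  map_left : ∀ {X X' : C} (Y : C) (c : k) (f f' : X ⟶ X'),
    F.map ((c • f + f').op ×ₘ 𝟙 Y) = c • F.map (f.op ×ₘ 𝟙 Y) + F.map (f'.op ×ₘ 𝟙 Y)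
  map_right : ∀ (X : C) {Y Y' : C} (c : k) (g g' : Y ⟶ Y'),
    F.map (𝟙 (op X) ×ₘ (c • g + g')) = c • F.map (𝟙 (op X) ×ₘ g) + F.map (𝟙 (op X) ×ₘ g')

variable {k} {F : Cᵒᵖ × C ⥤ D}

namespace IsBilinear

theorem additive_sectL (hF : IsBilinear k F) (Y : C) : (Prod.sectL Cᵒᵖ Y ⋙ F).Additive where
  map_add {X X' f g} := by simpa using! hF.map_left Y 1 f.unop g.unop

theorem additive_sectR (hF : IsBilinear k F) (X : C) : (Prod.sectR (op X) C ⋙ F).Additive where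
  map_add {Y Y' f g} := by simpa using! hF.map_right X 1 f g

theorem map_smul_id_left (hF : IsBilinear k F) (X Y : C) (c : k) :
    F.map ((c • 𝟙 X).op ×ₘ 𝟙 Y) = c • 𝟙 (F.obj (op X, Y)) := by
  have := hF.additive_sectL Y
  simpa [-op_zero, map_zero_op_prod_id] using hF.map_left Y c (𝟙 X) 0

theorem map_smul_id_right (hF : IsBilinear k F) (X Y : C) (c : k) :
    F.map (𝟙 (op X) ×ₘ (c • 𝟙 Y)) = c • 𝟙 (F.obj (op X, Y)) := by
  have := hF.additive_sectR X
  simpa [map_id_prod_zero] using hF.map_right X c (𝟙 Y) 0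

end IsBilinear

theorem IsSchurFamily.isDinaturalOn {S : ι → C} (hS : IsSchurFamily k S) (hF : IsBilinear k F)
    {E : D} (e : ∀ i, F.obj (op (S i), S i) ⟶ E) : IsDinaturalOn S F e := by
  intro i j g
  by_cases hij : i = j
  · subst hij
    obtain ⟨c, rfl⟩ := hS.exists_smul_id g
    rw [hF.map_smul_id_left, hF.map_smul_id_right]
  · have := hF.additive_sectL (S i)
    have := hF.additive_sectR (S j)
    obtain rfl := hS.hom_eq_zero hij g
    rw [map_zero_op_prod_id, map_id_prod_zero, zero_comp, zero_comp]

variable (F) in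
theorem fusion_coend_of_bilinear_functor_general {S : ι → C} (hS : IsSchurFamily k S)
    (hF : IsBilinear k F) [HasBiproduct fun i => F.obj (op (S i), S i)]
    {Λ : C → Type*} [∀ X, Fintype (Λ X)] (P : ∀ X, IdentityDecomposition S (Λ X) X) :
    IsDinaturalOn (fun X : C => X) F
        (fun X => (P X).extend F (biproduct.ι fun i => F.obj (op (S i), S i))) ∧
      ∀ (E : D) (d : ∀ X : C, F.obj (op X, X) ⟶ E), IsDinaturalOn (fun X : C => X) F d →
        (∀ X, (P X).extend F (biproduct.ι fun i => F.obj (op (S i), S i)) ≫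
          biproduct.desc (fun i => d (S i)) = d X) ∧
        ∀ φ : (⨁ fun i => F.obj (op (S i), S i)) ⟶ E,
          (∀ X, (P X).extend F (biproduct.ι fun i => F.obj (op (S i), S i)) ≫ φ = d X) →
          φ = biproduct.desc fun i => d (S i) := by
  have := hF.additive_sectL
  have := hF.additive_sectR
  have ι_dinatural := hS.isDinaturalOn hF (biproduct.ι fun i => F.obj (op (S i), S i))
  refine ⟨fun X Y f => (P X).map_comp_extend F (P Y) ι_dinatural f,
    fun E d hd => ⟨fun X => ?_, fun φ hφ => biproduct.hom_ext' _ _ fun i => ?_⟩⟩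
  · simp only [IdentityDecomposition.extend_comp, biproduct.ι_desc]
    exact (P X).extend_restrict F hd
  · rw [biproduct.ι_desc, ← hφ (S i), (P (S i)).extend_eq_self F ι_dinatural]

end Linear

end CoendOfGenerators

theorem IsRepresentativeSet.isSchurFamily {k : Type*} [CommRing k] {C : Type*} [Category C]
    [Preadditive C] [Linear k C] [MonoidalCategory C] [MonoidalPreadditive C]
    [MonoidalLinear k C] [HasFiniteBiproducts C] [PivotalCat C] [MonoidalKCat k C]
    [PreFusionCat k C] {I : Set C} (hI : IsRepresentativeSet k C I) {ι : Type*} {S : ι → C}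
    (hS : Function.Injective S) (hmem : ∀ i, S i ∈ I) : IsSchurFamily k S where
  exists_smul_id {i} g := (hI.2.1 _ (hmem i)).surjective g
  hom_eq_zero {i j} hij g := by
    have simple_i := hI.2.1 _ (hmem i)
    have not_iso : IsEmpty (S i ≅ S j) := ⟨fun iso => hij <| hS <|
      (hI.2.2 _ simple_i).unique ⟨hmem i, ⟨Iso.refl _⟩⟩ ⟨hmem j, ⟨iso⟩⟩⟩
    exact PreFusionCat.simple_hom_zero simple_i (hI.2.1 _ (hmem j)) not_iso g

open Opposite in
/-- Coends of bilinear functors on a fusion category (Section 12.1): let `C` be a fusion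
category over `k` with representative set `I` of simple objects, `D` a `k`-linear category
admitting finite direct sums, and `F : Cᵒᵖ × C ⥤ D` a functor `k`-linear in each variable.
Then `F` has a coend, namely `C₀ = ⊕_{i ∈ I} F(i,i)` together with the dinatural
transformation `ρ_X = ∑_α ι_{i_α} ∘ F(q_X^α, p_X^α)` (for any choice of `I`-partitions
`(p_X^α, q_X^α)` of the objects `X`); moreover any dinatural transformation `d` from `F`
to an object `D₀` factors through `ρ` via the unique morphism `C₀ ⟶ D₀` whose restriction
to the summand `F(i,i)` is `d_i`. -/
theorem fusion_coend_of_bilinear_functor (k : Type w) [CommRing k] (C : Type u)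
    [Category.{v} C] [Preadditive C] [CategoryTheory.Linear k C] [MonoidalCategory C]
    [MonoidalPreadditive C] [CategoryTheory.MonoidalLinear k C]
    [CategoryTheory.Limits.HasFiniteBiproducts C] [PivotalCat C] [MonoidalKCat k C]
    [PreFusionCat k C] [FusionCat k C]
    (I : Finset C) (hI : IsRepresentativeSet k C ↑I)
    (D : Type*) [Category D] [Preadditive D] [CategoryTheory.Linear k D]
    [CategoryTheory.Limits.HasFiniteBiproducts D]
    (F : Cᵒᵖ × C ⥤ D)
    -- `F` is `k`-linear in the second variable:
    (hF₂ : ∀ (X : C) {Y Y' : C} (c : k) (g g' : Y ⟶ Y'),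
      F.map ((𝟙 (op X), c • g + g') : (op X, Y) ⟶ (op X, Y')) =
        c • F.map ((𝟙 (op X), g) : (op X, Y) ⟶ (op X, Y')) +
          F.map ((𝟙 (op X), g') : (op X, Y) ⟶ (op X, Y')))
    -- `F` is `k`-linear in the first variable:
    (hF₁ : ∀ {X X' : C} (Y : C) (c : k) (f f' : X ⟶ X'),
      F.map (((c • f + f').op, 𝟙 Y) : (op X', Y) ⟶ (op X, Y)) =
        c • F.map ((f.op, 𝟙 Y) : (op X', Y) ⟶ (op X, Y)) +
          F.map ((f'.op, 𝟙 Y) : (op X', Y) ⟶ (op X, Y)))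
    -- a choice of `I`-partitions of all objects of `C`:
    (n : C → ℕ) (obj : ∀ X : C, Fin (n X) → C)
    (p : ∀ (X : C) (a : Fin (n X)), X ⟶ obj X a)
    (q : ∀ (X : C) (a : Fin (n X)), obj X a ⟶ X)
    (hmem : ∀ X a, obj X a ∈ I)
    (hsum : ∀ X, ∑ a, p X a ≫ q X a = 𝟙 X)
    (hqp : ∀ X a, q X a ≫ p X a = 𝟙 (obj X a))
    (horth : ∀ X a b, a ≠ b → q X a ≫ p X b = 0) :
    -- the associated dinatural transformation `ρ` to `⊕_{i ∈ I} F(i,i)` is dinatural: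
    (∀ {X Y : C} (f : X ⟶ Y),
      F.map ((f.op, 𝟙 X) : (op Y, X) ⟶ (op X, X)) ≫
          (∑ a, F.map (((q X a).op, p X a) : (op X, X) ⟶ (op (obj X a), obj X a)) ≫
            biproduct.ι (fun i : ↥I => F.obj (op i.1, i.1)) ⟨obj X a, hmem X a⟩) =
        F.map ((𝟙 (op Y), f) : (op Y, X) ⟶ (op Y, Y)) ≫
          (∑ a, F.map (((q Y a).op, p Y a) : (op Y, Y) ⟶ (op (obj Y a), obj Y a)) ≫
            biproduct.ι (fun i : ↥I => F.obj (op i.1, i.1)) ⟨obj Y a, hmem Y a⟩)) ∧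
    -- and it is a coend: every dinatural transformation `d` factors uniquely through it,
    -- via the morphism whose restriction to the summand `F(i,i)` is `d_i`:
    ∀ (D₀ : D) (d : ∀ X : C, F.obj (op X, X) ⟶ D₀),
      (∀ {X Y : C} (f : X ⟶ Y),
        F.map ((f.op, 𝟙 X) : (op Y, X) ⟶ (op X, X)) ≫ d X =
          F.map ((𝟙 (op Y), f) : (op Y, X) ⟶ (op Y, Y)) ≫ d Y) →
      (∀ X : C,
        (∑ a, F.map (((q X a).op, p X a) : (op X, X) ⟶ (op (obj X a), obj X a)) ≫
            biproduct.ι (fun i : ↥I => F.obj (op i.1, i.1)) ⟨obj X a, hmem X a⟩) ≫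
          biproduct.desc (fun i : ↥I => d i.1) = d X) ∧
      ∀ φ : (⨁ fun i : ↥I => F.obj (op i.1, i.1)) ⟶ D₀,
        (∀ X : C,
          (∑ a, F.map (((q X a).op, p X a) : (op X, X) ⟶ (op (obj X a), obj X a)) ≫
              biproduct.ι (fun i : ↥I => F.obj (op i.1, i.1)) ⟨obj X a, hmem X a⟩) ≫ φ =
            d X) →
        φ = biproduct.desc (fun i : ↥I => d i.1) := by
  exact fusion_coend_of_bilinear_functor_general F
    (hI.isSchurFamily Subtype.val_injective fun i : ↥I => i.2) ⟨hF₁, hF₂⟩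
    fun X => ⟨fun a => ⟨obj X a, hmem X a⟩, p X, q X, hsum X⟩
end
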